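/- arXiv:2304.00309 — 2 statements merged into one kernel-verified Lean document; each statement's English description precedes it below -/
import Mathlib

section
/- Let H be a separable Hilbert space with orthonormal basis {e_j} and let A ∈ B(H) be positive. Then the Schur map S_A : T(H) → T(H), S_A(T) = A ⊙ T, is a well-defined quantum operation. Explicitly, if B ∈ B(H) satisfies A^T = B*B (A^T the transpose of A with respect to {e_j}) and A_k ∈ B(H) is the diagonal operator determined by A_k e_j = ⟨e_k, B e_j⟩ e_j for all j, then Σ_k A_k* A_k converges in the strong operator topology to a bounded operator and S_A(T) = Σ_k A_k T A_k* (trace-norm convergent) for all T ∈ T(H). -/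
/-!
The Schur map has matrix entries `A_ij T_ij`. Whenever a family of coefficients `c k j` satisfies
`∑_k c k i * conj (c k j) = A_ij`, the diagonal operators `D_k e_j = c k j e_j` give
`(D_k T D_k*)_ij = c k i * conj (c k j) * T_ij`, so the Kraus series formally sums to `A ⊙ T`.

For convergence, the diagonal case `i = j` gives `∑_k |c k j|² = A_jj ≤ ‖A‖`, hence by Parseval
`∑_k ‖D_k x‖² ≤ ‖A‖ ‖x‖²` (`sum_norm_sq_le`). By Cauchy–Schwarz this yields strong convergence of
`∑ D_k* D_k` (`summable_adjoint_comp`) and, for `T = ∑_n |x_n⟩⟨y_n|`, absolute convergence of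
`∑ D_k T D_k*` with bound `‖A‖ ∑_n ‖x_n‖ ‖y_n‖` (`summable_kraus`).

This is applied to `c k j = ⟨C e_j, e_k⟩` with `A = C* C` to obtain the map, and to
`c k j = ⟨e_k, B e_j⟩` for an arbitrary `B` with `B* B = Aᵀ`; the two sums agree because
an operator is determined by its matrix entries.
-/

noncomputable section

namespace PaperInf

open scoped ComplexInnerProductSpace ComplexOrder
open ContinuousLinearMap TopologicalSpace

/-- A bundled separable complex Hilbert space. -/
structure SepHilbert : Type 1 where
  carrier : Type
  [nacg : NormedAddCommGroup carrier]
  [ips : InnerProductSpace ℂ carrier]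
  [cs : CompleteSpace carrier]
  [sep : SeparableSpace carrier]

attribute [instance] SepHilbert.nacg SepHilbert.ips SepHilbert.cs SepHilbert.sep

variable {H H1 H2 H3 H4 K W W' : Type*}
  [NormedAddCommGroup H] [InnerProductSpace ℂ H] [CompleteSpace H]
  [NormedAddCommGroup H1] [InnerProductSpace ℂ H1] [CompleteSpace H1]
  [NormedAddCommGroup H2] [InnerProductSpace ℂ H2] [CompleteSpace H2]
  [NormedAddCommGroup H3] [InnerProductSpace ℂ H3] [CompleteSpace H3]
  [NormedAddCommGroup H4] [InnerProductSpace ℂ H4] [CompleteSpace H4]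
  [NormedAddCommGroup K] [InnerProductSpace ℂ K] [CompleteSpace K]
  [NormedAddCommGroup W] [InnerProductSpace ℂ W] [CompleteSpace W]
  [NormedAddCommGroup W'] [InnerProductSpace ℂ W'] [CompleteSpace W']

/-- `T` is a trace-class operator: it admits a nuclear decomposition
`T = Σ_n |x_n⟩⟨y_n|` with `Σ_n ‖x_n‖ ‖y_n‖ < ∞`. -/
def IsTraceClass (T : H →L[ℂ] H) : Prop :=
  ∃ x y : ℕ → H, Summable (fun n => ‖x n‖ * ‖y n‖) ∧
    ∀ v, HasSum (fun n => ⟪y n, v⟫ • x n) (T v)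

/-- The rank-one operator `|x⟩⟨y| : H1 → H2`, `v ↦ ⟪y, v⟫ x`. -/
def ketbra (x : H2) (y : H1) : H1 →L[ℂ] H2 :=
  (innerSL ℂ y).smulRight x

/-- The trace of an operator, computed in a (choice of) Hilbert basis.  On trace-class
operators this is the usual basis-independent trace. -/
def trace (T : H →L[ℂ] H) : ℂ :=
  ∑' i : (exists_hilbertBasis ℂ H).choose, ⟪(i : H), T (i : H)⟫

/-- `ρ` is a state: a positive trace-class operator of trace one. -/
def IsState (ρ : H →L[ℂ] H) : Prop :=
  IsTraceClass ρ ∧ ρ.IsPositive ∧ trace ρ = 1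

/-- `Φ` is a quantum operation from `T(H1)` to `T(H2)`: a (trace-norm bounded linear) map whose
dual is a normal completely positive map; equivalently a map admitting a Kraus decomposition
`Φ(T) = Σ_j A_j T A_j*` with `Σ_j A_j* A_j` convergent in the strong operator topology to a
bounded operator. -/
def IsQuantumOperation (Φ : (H1 →L[ℂ] H1) → (H2 →L[ℂ] H2)) : Prop :=
  ∃ (ι : Type) (_ : Countable ι) (A : ι → H1 →L[ℂ] H2) (S : H1 →L[ℂ] H1),
    (∀ x, HasSum (fun j => adjoint (A j) (A j x)) (S x)) ∧
    ∀ T, IsTraceClass T → HasSum (fun j => A j ∘L T ∘L adjoint (A j)) (Φ T)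

/-- A quantum channel is a trace-preserving quantum operation. -/
def IsQuantumChannel (Φ : (H1 →L[ℂ] H1) → (H2 →L[ℂ] H2)) : Prop :=
  IsQuantumOperation Φ ∧ ∀ T, IsTraceClass T → trace (Φ T) = trace T

/-- A realization of `W` as the Hilbert-space tensor product `K ⊗ H`:
a map `t : K → H → W` with `⟪t x y, t x' y'⟫ = ⟪x,x'⟫ ⟪y,y'⟫` whose range spans a
dense subspace. -/
structure TensorStruct (K H W : Type*) [NormedAddCommGroup K] [InnerProductSpace ℂ K]
    [NormedAddCommGroup H] [InnerProductSpace ℂ H]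
    [NormedAddCommGroup W] [InnerProductSpace ℂ W] : Type _ where
  t : K → H → W
  inner_t : ∀ (x x' : K) (y y' : H), ⟪t x y, t x' y'⟫ = ⟪x, x'⟫ * ⟪y, y'⟫
  dense_t : (Submodule.span ℂ {w : W | ∃ x y, w = t x y}).topologicalClosure = ⊤

/-- `P = tr_{H'}(S)`: the partial trace of `S ∈ B(W)`, `W = H ⊗ H'`, over the second factor. -/
def IsPartialTraceRight {H' : Type*} [NormedAddCommGroup H'] [InnerProductSpace ℂ H']
    (ts : TensorStruct H H' W) (S : W →L[ℂ] W) (P : H →L[ℂ] H) : Prop :=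
  ∃ (ι : Type) (_ : Countable ι) (b : HilbertBasis ι ℂ H'),
    ∀ x y : H, HasSum (fun i => ⟪ts.t x (b i), S (ts.t y (b i))⟫) ⟪x, P y⟫

/-- `P = tr_{H}(S)`: the partial trace of `S ∈ B(W)`, `W = H ⊗ H'`, over the first factor. -/
def IsPartialTraceLeft {H' : Type*} [NormedAddCommGroup H'] [InnerProductSpace ℂ H']
    (ts : TensorStruct H H' W) (S : W →L[ℂ] W) (P : H' →L[ℂ] H') : Prop :=
  ∃ (ι : Type) (_ : Countable ι) (b : HilbertBasis ι ℂ H),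
    ∀ x y : H', HasSum (fun i => ⟪ts.t (b i) x, S (ts.t (b i) y)⟫) ⟪x, P y⟫

/-- The quantum operation `Ψ : T(H1) → T(H3)` is complementary to the quantum operation
`Φ : T(H1) → T(H2)`: there is a bounded operator `A : H1 → H2 ⊗ H3` with
`Φ(T) = tr_{H3}(A T A*)` and `Ψ(T) = tr_{H2}(A T A*)` for all trace-class `T`. -/
def IsComplementary (Ψ : (H1 →L[ℂ] H1) → (H3 →L[ℂ] H3))
    (Φ : (H1 →L[ℂ] H1) → (H2 →L[ℂ] H2)) : Prop :=
  ∃ (W : SepHilbert) (ts : TensorStruct H2 H3 W.carrier) (A : H1 →L[ℂ] W.carrier),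
    ∀ T, IsTraceClass T →
      IsPartialTraceRight ts (A ∘L T ∘L adjoint A) (Φ T) ∧
      IsPartialTraceLeft ts (A ∘L T ∘L adjoint A) (Ψ T)

/-- `Φ` is degradable: there is a quantum operation `Γ` with `Γ ∘ Φ` complementary to `Φ`;
equivalently (and as formalized here), for every quantum operation `Ψ` complementary to `Φ`
there is a quantum operation `Γ` with `Γ ∘ Φ = Ψ`. -/
def Degradable (Φ : (H1 →L[ℂ] H1) → (H2 →L[ℂ] H2)) : Prop :=
  ∀ (K : SepHilbert) (Ψ : (H1 →L[ℂ] H1) → (K.carrier →L[ℂ] K.carrier)),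
    IsQuantumOperation Ψ → IsComplementary Ψ Φ →
      ∃ Γ : (H2 →L[ℂ] H2) → (K.carrier →L[ℂ] K.carrier),
        IsQuantumOperation Γ ∧ ∀ T, IsTraceClass T → Γ (Φ T) = Ψ T

/-- `Φ` is anti-degradable: some (equivalently, by the uniqueness of complements up to
partial isometries, every) quantum operation complementary to `Φ` is degradable. -/
def AntiDegradable (Φ : (H1 →L[ℂ] H1) → (H2 →L[ℂ] H2)) : Prop :=
  ∀ (K : SepHilbert) (Ψ : (H1 →L[ℂ] H1) → (K.carrier →L[ℂ] K.carrier)),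
    IsQuantumOperation Ψ → IsComplementary Ψ Φ → Degradable Ψ

/-- `τ = ρ1 ⊗ ρ2` on `W = K ⊗ H`. -/
def IsProductOp (ts : TensorStruct K H W) (ρ1 : K →L[ℂ] K) (ρ2 : H →L[ℂ] H)
    (τ : W →L[ℂ] W) : Prop :=
  ∀ (x x' : K) (y y' : H), ⟪ts.t x y, τ (ts.t x' y')⟫ = ⟪x, ρ1 x'⟫ * ⟪y, ρ2 y'⟫

/-- `ρ` (a positive trace-class operator on `W = K ⊗ H`) is countably decomposable separable:
`ρ = Σ_n p_n ρ_n^(1) ⊗ ρ_n^(2)` (trace-norm convergent) for states `ρ_n^(1)`, `ρ_n^(2)` and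
nonnegative summable weights `p_n`. -/
def CDSeparable (ts : TensorStruct K H W) (ρ : W →L[ℂ] W) : Prop :=
  ∃ (p : ℕ → ℝ) (ρ1 : ℕ → K →L[ℂ] K) (ρ2 : ℕ → H →L[ℂ] H) (τ : ℕ → W →L[ℂ] W),
    (∀ n, 0 ≤ p n) ∧ Summable p ∧
    (∀ n, IsState (ρ1 n)) ∧ (∀ n, IsState (ρ2 n)) ∧
    (∀ n, IsProductOp ts (ρ1 n) (ρ2 n) (τ n)) ∧
    HasSum (fun n => (p n : ℂ) • τ n) ρ

/-- `σ = (id_K ⊗ Φ)(ρ)`, where `ρ ∈ T(K ⊗ H1)`, `σ ∈ T(K ⊗ H2)`: for a Kraus decomposition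
`Φ = Σ_j A_j (·) A_j*` one has `σ = Σ_j (I ⊗ A_j) ρ (I ⊗ A_j)*`. -/
def IsIdTensorApply (ts : TensorStruct K H1 W) (ts' : TensorStruct K H2 W')
    (Φ : (H1 →L[ℂ] H1) → (H2 →L[ℂ] H2)) (ρ : W →L[ℂ] W) (σ : W' →L[ℂ] W') : Prop :=
  ∃ (ι : Type) (_ : Countable ι) (A : ι → H1 →L[ℂ] H2) (S : H1 →L[ℂ] H1),
    (∀ x, HasSum (fun j => adjoint (A j) (A j x)) (S x)) ∧
    (∀ T, IsTraceClass T → HasSum (fun j => A j ∘L T ∘L adjoint (A j)) (Φ T)) ∧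
    ∃ L : ι → (W →L[ℂ] W'),
      (∀ j x y, L j (ts.t x y) = ts'.t x (A j y)) ∧
      HasSum (fun j => L j ∘L ρ ∘L adjoint (L j)) σ

/-- `Φ` is strongly entanglement breaking: for every separable Hilbert space `K` and every
state `ρ` on `K ⊗ H1`, the state `(id_K ⊗ Φ)(ρ)` is countably decomposable separable. -/
def IsSEB (Φ : (H1 →L[ℂ] H1) → (H2 →L[ℂ] H2)) : Prop :=
  ∀ (K W W' : SepHilbert) (ts : TensorStruct K.carrier H1 W.carrier)
    (ts' : TensorStruct K.carrier H2 W'.carrier)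
    (ρ : W.carrier →L[ℂ] W.carrier) (σ : W'.carrier →L[ℂ] W'.carrier),
    IsState ρ → IsIdTensorApply ts ts' Φ ρ σ → CDSeparable ts' σ

/-- Parseval's identity for a Hilbert basis. -/
lemma hasSum_norm_sq_inner {ι : Type*} (b : HilbertBasis ι ℂ H) (x : H) :
    HasSum (fun j => ‖⟪b j, x⟫‖ ^ 2) (‖x‖ ^ 2) := by
  have h := lp.hasSum_norm (p := 2) (by norm_num) (b.repr x)
  simpa [b.repr_apply_apply] using h

lemma ext_inner_basis {ι : Type*} (b : HilbertBasis ι ℂ H) {x y : H}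
    (h : ∀ i, ⟪b i, x⟫ = ⟪b i, y⟫) : x = y := by
  apply b.repr.injective
  ext i
  simpa [b.repr_apply_apply] using h i

lemma ext_matrix {ι : Type*} (b : HilbertBasis ι ℂ H) {S T : H →L[ℂ] H}
    (h : ∀ i j, ⟪b i, S (b j)⟫ = ⟪b i, T (b j)⟫) : S = T := by
  apply ContinuousLinearMap.ext_on
    (Submodule.dense_iff_topologicalClosure_eq_top.2 b.dense_span)
  rintro _ ⟨j, rfl⟩
  exact ext_inner_basis b fun i => h i j

/-- A bounded sequence is the diagonal of a bounded diagonal operator. -/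
lemma exists_diagonal {ι : Type*} (b : HilbertBasis ι ℂ H) (a : ι → ℂ) (M : ℝ)
    (ha : ∀ j, ‖a j‖ ≤ M) : ∃ D : H →L[ℂ] H, ∀ j, D (b j) = a j • b j := by
  classical
  rcases isEmpty_or_nonempty ι with hι | ⟨⟨j₀⟩⟩
  · exact ⟨0, fun j => isEmptyElim j⟩
  have hM : 0 ≤ M := (norm_nonneg _).trans (ha j₀)
  have hbd : ∀ (f : lp (fun _ : ι => ℂ) 2) (s : Finset ι),
      ∑ i ∈ s, ‖a i * f i‖ ^ (2 : ENNReal).toReal ≤ (M * ‖f‖) ^ (2 : ENNReal).toReal := by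
    intro f s
    have h := lp.sum_rpow_le_norm_rpow (p := 2) (by norm_num) f s
    simp only [ENNReal.toReal_ofNat, Real.rpow_ofNat] at h ⊢
    calc ∑ i ∈ s, ‖a i * f i‖ ^ 2 ≤ ∑ i ∈ s, M ^ 2 * ‖f i‖ ^ 2 := by
          gcongr with i
          rw [norm_mul, mul_pow]
          gcongr
          exact ha i
      _ ≤ (M * ‖f‖) ^ 2 := by
          rw [← Finset.mul_sum, mul_pow]
          gcongr
  let L : lp (fun _ : ι => ℂ) 2 →ₗ[ℂ] lp (fun _ : ι => ℂ) 2 :=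
    { toFun := fun f => ⟨fun i => a i * f i, memℓp_gen' (hbd f)⟩
      map_add' := fun f g => by ext i; exact mul_add _ _ _
      map_smul' := fun c f => by ext i; simp [mul_left_comm] }
  let D₀ := L.mkContinuous M fun f =>
    lp.norm_le_of_forall_sum_le (by norm_num) (by positivity) (hbd f)
  refine ⟨(b.repr.symm : lp (fun _ : ι => ℂ) 2 →L[ℂ] H) ∘L D₀ ∘L
    (b.repr : H →L[ℂ] lp (fun _ : ι => ℂ) 2), fun j => ?_⟩
  apply b.repr.injective
  ext i
  have : b.repr (b.repr.symm (D₀ (b.repr (b j)))) i = a i * b.repr (b j) i := by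
    rw [LinearIsometryEquiv.apply_symm_apply]; rfl
  change b.repr (b.repr.symm (D₀ (b.repr (b j)))) i = _
  rw [this]
  by_cases hij : i = j
  · subst hij; simp
  · simp [b.repr_self, hij]

lemma adjoint_diagonal {ι : Type*} (b : HilbertBasis ι ℂ H) {a : ι → ℂ} {D : H →L[ℂ] H}
    (hD : ∀ j, D (b j) = a j • b j) (j : ι) :
    adjoint D (b j) = (starRingEnd ℂ) (a j) • b j := by
  classical
  refine ext_inner_basis b fun i => ?_
  rw [adjoint_inner_right, hD, inner_smul_left, inner_smul_right,
    orthonormal_iff_ite.1 b.orthonormal]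
  by_cases hij : i = j <;> simp [hij]

lemma inner_diagonal {ι : Type*} (b : HilbertBasis ι ℂ H) {a : ι → ℂ} {D : H →L[ℂ] H}
    (hD : ∀ j, D (b j) = a j • b j) (j : ι) (x : H) :
    ⟪b j, D x⟫ = a j * ⟪b j, x⟫ := by
  rw [← adjoint_inner_left, adjoint_diagonal b hD, inner_smul_left, Complex.conj_conj]

/-- If every column of the coefficient matrix `c` has square sum at most `M`, the diagonal
operators with diagonals `c k` satisfy `∑ D_k* D_k ≤ M` in the sense of quadratic forms. -/
lemma sum_norm_sq_le {ι κ : Type*} (b : HilbertBasis ι ℂ H) {c : κ → ι → ℂ} {M : ℝ}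
    (hM : ∀ (F : Finset κ) j, ∑ k ∈ F, ‖c k j‖ ^ 2 ≤ M) {D : κ → H →L[ℂ] H}
    (hD : ∀ k j, D k (b j) = c k j • b j) (F : Finset κ) (x : H) :
    ∑ k ∈ F, ‖D k x‖ ^ 2 ≤ M * ‖x‖ ^ 2 := by
  have h1 : HasSum (fun j => ∑ k ∈ F, ‖⟪b j, D k x⟫‖ ^ 2) (∑ k ∈ F, ‖D k x‖ ^ 2) :=
    hasSum_sum fun k _ => hasSum_norm_sq_inner b (D k x)
  refine hasSum_le (fun j => ?_) h1 ((hasSum_norm_sq_inner b x).mul_left M)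
  simp only [inner_diagonal b (hD _), norm_mul, mul_pow, ← Finset.sum_mul]
  gcongr
  exact hM F j

/-- Cauchy–Schwarz for a family of operators with `∑ ‖D k x‖² ≤ M ‖x‖²`. -/
lemma sum_norm_mul_norm_le {κ : Type*} {D : κ → H →L[ℂ] H} {M : ℝ} (hM0 : 0 ≤ M)
    (hD : ∀ (F : Finset κ) x, ∑ k ∈ F, ‖D k x‖ ^ 2 ≤ M * ‖x‖ ^ 2) (F : Finset κ) (x y : H) :
    ∑ k ∈ F, ‖D k x‖ * ‖D k y‖ ≤ M * (‖x‖ * ‖y‖) := by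
  calc ∑ k ∈ F, ‖D k x‖ * ‖D k y‖
      ≤ √(∑ k ∈ F, ‖D k x‖ ^ 2) * √(∑ k ∈ F, ‖D k y‖ ^ 2) :=
        Real.sum_mul_le_sqrt_mul_sqrt _ _ _
    _ ≤ √(M * ‖x‖ ^ 2) * √(M * ‖y‖ ^ 2) := by gcongr <;> exact hD F _
    _ = M * (‖x‖ * ‖y‖) := by
        rw [Real.sqrt_mul hM0, Real.sqrt_mul hM0, Real.sqrt_sq (norm_nonneg _),
          Real.sqrt_sq (norm_nonneg _)]
        linear_combination ‖x‖ * ‖y‖ * Real.mul_self_sqrt hM0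

/-- Strong summability of `∑ D_k* D_k`. The Cauchy criterion holds because, by Cauchy–Schwarz,
a finite partial sum satisfies `‖∑ D_k* D_k x‖² ≤ M ∑ ‖D_k x‖²`, and `∑ ‖D_k x‖²` converges. -/
lemma summable_adjoint_comp {κ : Type*} {D : κ → H →L[ℂ] H} {M : ℝ} (hM0 : 0 ≤ M)
    (hD : ∀ (F : Finset κ) x, ∑ k ∈ F, ‖D k x‖ ^ 2 ≤ M * ‖x‖ ^ 2) (x : H) :
    Summable (fun k => adjoint (D k) (D k x)) := by
  have hs : Summable (fun k => ‖D k x‖ ^ 2) :=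
    summable_of_sum_le (fun k => by positivity) fun F => hD F x
  have key : ∀ F : Finset κ,
      ‖∑ k ∈ F, adjoint (D k) (D k x)‖ ^ 2 ≤ M * ∑ k ∈ F, ‖D k x‖ ^ 2 := by
    intro F
    set z := ∑ k ∈ F, adjoint (D k) (D k x) with hz
    have h1 : ‖z‖ ^ 2 ≤ ∑ k ∈ F, ‖D k z‖ * ‖D k x‖ := by
      calc ‖z‖ ^ 2 = ‖⟪z, z⟫‖ := by rw [inner_self_eq_norm_sq_to_K]; simp
        _ = ‖∑ k ∈ F, ⟪D k z, D k x⟫‖ := by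
            conv_lhs => rw [hz, inner_sum, ← hz]
            simp only [adjoint_inner_right]
        _ ≤ ∑ k ∈ F, ‖D k z‖ * ‖D k x‖ :=
            (norm_sum_le _ _).trans (Finset.sum_le_sum fun k _ => norm_inner_le_norm _ _)
    have h2 := Finset.sum_mul_sq_le_sq_mul_sq F (fun k => ‖D k z‖) (fun k => ‖D k x‖)
    have h3 : (‖z‖ ^ 2) ^ 2 ≤ (M * ‖z‖ ^ 2) * ∑ k ∈ F, ‖D k x‖ ^ 2 :=
      calc (‖z‖ ^ 2) ^ 2 ≤ (∑ k ∈ F, ‖D k z‖ * ‖D k x‖) ^ 2 := by gcongr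
        _ ≤ _ := h2
        _ ≤ _ := by gcongr; exact hD F z
    have hN : 0 ≤ ∑ k ∈ F, ‖D k x‖ ^ 2 := by positivity
    rcases (norm_nonneg z).eq_or_lt with h0 | h0
    · rw [← h0]; simpa using mul_nonneg hM0 hN
    · have : 0 < ‖z‖ ^ 2 := by positivity
      nlinarith
  rw [summable_iff_vanishing_norm]
  intro ε hε
  obtain ⟨s, hs⟩ := summable_iff_vanishing_norm.1 hs (ε ^ 2 / (M + 1)) (by positivity)
  refine ⟨s, fun t ht => ?_⟩
  have h1 := (le_abs_self _).trans_lt (hs t ht)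
  rw [lt_div_iff₀ (by positivity)] at h1
  have h2 : 0 ≤ ∑ k ∈ t, ‖D k x‖ ^ 2 := by positivity
  refine lt_of_pow_lt_pow_left₀ 2 hε.le ((key t).trans_lt ?_)
  linarith

/-- Absolute convergence of the Kraus series `∑ D_k T D_k*` for nuclear `T = ∑ |x_n⟩⟨y_n|`:
`‖D_k T D_k*‖ ≤ ∑_n ‖D_k x_n‖ ‖D_k y_n‖`, and the sum over `k` is at most
`M ∑_n ‖x_n‖ ‖y_n‖`. -/
lemma summable_kraus {κ : Type*} {D : κ → H →L[ℂ] H} {M : ℝ} (hM0 : 0 ≤ M)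
    (hD : ∀ (F : Finset κ) x, ∑ k ∈ F, ‖D k x‖ ^ 2 ≤ M * ‖x‖ ^ 2) {T : H →L[ℂ] H}
    (hT : IsTraceClass T) : Summable (fun k => D k ∘L T ∘L adjoint (D k)) := by
  obtain ⟨x, y, hxy, hT⟩ := hT
  have hs : ∀ k, Summable (fun n => ‖D k (x n)‖ * ‖D k (y n)‖) := fun k => by
    refine Summable.of_nonneg_of_le (fun n => by positivity) (fun n => ?_)
      (hxy.mul_left (‖D k‖ * ‖D k‖))
    calc ‖D k (x n)‖ * ‖D k (y n)‖ ≤ (‖D k‖ * ‖x n‖) * (‖D k‖ * ‖y n‖) := by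
          gcongr <;> exact le_opNorm _ _
      _ = _ := by ring
  have hb : ∀ k, ‖D k ∘L T ∘L adjoint (D k)‖ ≤ ∑' n, ‖D k (x n)‖ * ‖D k (y n)‖ := by
    intro k
    refine opNorm_le_bound _ (tsum_nonneg fun n => by positivity) fun v => ?_
    have h1 := (hT (adjoint (D k) v)).mapL (D k)
    refine h1.norm_le_of_bounded ((hs k).hasSum.mul_right ‖v‖) fun n => ?_
    rw [map_smul, norm_smul, adjoint_inner_right]
    calc ‖⟪D k (y n), v⟫‖ * ‖D k (x n)‖ ≤ (‖D k (y n)‖ * ‖v‖) * ‖D k (x n)‖ := by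
          gcongr; exact norm_inner_le_norm _ _
      _ = _ := by ring
  apply Summable.of_norm
  refine summable_of_sum_le (c := ∑' n, M * (‖x n‖ * ‖y n‖)) (fun k => norm_nonneg _) fun F => ?_
  refine (Finset.sum_le_sum fun k _ => hb k).trans ?_
  rw [← Summable.tsum_finsetSum fun k _ => hs k]
  exact Summable.tsum_le_tsum (fun n => sum_norm_mul_norm_le hM0 hD F _ _)
    (summable_sum fun k _ => hs k) (hxy.mul_left M)

/-- The core of the argument, for an arbitrary coefficient matrix `c` whose columns `c_j` satisfy
`⟨c_j, c_i⟩ = A_ij`: the diagonal operators with diagonals `c k` are Kraus operators of a map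
acting on matrix entries as multiplication by `A_ij`. -/
lemma kraus_of_coeff {ι κ : Type*} (b : HilbertBasis ι ℂ H) (A : H →L[ℂ] H)
    {c : κ → ι → ℂ}
    (hc : ∀ i j, HasSum (fun k => c k i * (starRingEnd ℂ) (c k j)) ⟪b i, A (b j)⟫)
    {D : κ → H →L[ℂ] H} (hD : ∀ k j, D k (b j) = c k j • b j) :
    (∃ S : H →L[ℂ] H, ∀ x, HasSum (fun k => adjoint (D k) (D k x)) (S x)) ∧
    ∀ T, IsTraceClass T → ∃ R : H →L[ℂ] H, HasSum (fun k => D k ∘L T ∘L adjoint (D k)) R ∧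
      ∀ i j, ⟪b i, R (b j)⟫ = ⟪b i, A (b j)⟫ * ⟪b i, T (b j)⟫ := by
  have hAn : ∀ j, ‖⟪b j, A (b j)⟫‖ ≤ ‖A‖ := fun j => by
    have h1 : ‖b j‖ = 1 := b.orthonormal.1 j
    calc ‖⟪b j, A (b j)⟫‖ ≤ ‖b j‖ * ‖A (b j)‖ := norm_inner_le_norm _ _
      _ ≤ ‖b j‖ * (‖A‖ * ‖b j‖) := by gcongr; exact le_opNorm _ _
      _ = ‖A‖ := by simp [h1]
  have hM : ∀ (F : Finset κ) j, ∑ k ∈ F, ‖c k j‖ ^ 2 ≤ ‖A‖ := by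
    intro F j
    have h1 : HasSum (fun k => ‖c k j‖ ^ 2) (⟪b j, A (b j)⟫).re := by
      have := (hc j j).mapL Complex.reCLM
      simpa [Complex.mul_conj, Complex.normSq_eq_norm_sq, ← Complex.ofReal_pow] using this
    exact (sum_le_hasSum F (fun k _ => by positivity) h1).trans
      ((Complex.re_le_norm _).trans (hAn j))
  have hsq := sum_norm_sq_le b hM hD
  have hA0 := norm_nonneg A
  constructor
  · obtain ⟨S, hS⟩ := exists_diagonal b (fun j => ⟪b j, A (b j)⟫) ‖A‖ hAn
    refine ⟨S, fun x => ?_⟩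
    have hx := (summable_adjoint_comp hA0 hsq x).hasSum
    convert hx using 1
    refine ext_inner_basis b fun j => ?_
    have h1 := hx.mapL (innerSL ℂ (b j))
    refine HasSum.unique ?_ h1
    rw [inner_diagonal b hS]
    refine HasSum.congr_fun ((hc j j).mul_right ⟪b j, x⟫) fun k => ?_
    rw [innerSL_apply_apply, adjoint_inner_right, hD, inner_smul_left, inner_diagonal b (hD k)]
    ring
  · intro T hT
    have hR := (summable_kraus hA0 hsq hT).hasSum
    refine ⟨_, hR, fun i j => ?_⟩
    have h1 := (hR.mapL (ContinuousLinearMap.apply ℂ H (b j))).mapL (innerSL ℂ (b i))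
    refine h1.unique ?_
    refine HasSum.congr_fun ((hc i j).mul_right ⟪b i, T (b j)⟫) fun k => ?_
    simp only [innerSL_apply_apply, ContinuousLinearMap.apply_apply, comp_apply]
    rw [inner_diagonal b (hD k), adjoint_diagonal b (hD k), map_smul, inner_smul_right]
    ring

/-- **Lemma 3.4.** For a positive `A ∈ B(H)` and an orthonormal basis `{e_j}` of
the separable Hilbert space `H`, the Schur map `S_A : T(H) → T(H)`, `S_A(T) = A ⊙ T`, is a
well-defined quantum operation.  Explicitly, if `B` satisfies `Aᵀ = B*B` (transpose with
respect to `{e_j}`) and `A_k` is the diagonal operator `A_k e_j = ⟨e_k, B e_j⟩ e_j`, then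
`Σ_k A_k* A_k` is SOT-convergent to a bounded operator and `S_A(T) = Σ_k A_k T A_k*`. -/
theorem schur_map_quantum_operation
    {H : Type*}
    [NormedAddCommGroup H] [InnerProductSpace ℂ H] [CompleteSpace H] [SeparableSpace H]
    {ι : Type} [Countable ι] (b : HilbertBasis ι ℂ H)
    (A : H →L[ℂ] H) (hA : A.IsPositive) :
    ∃ SA : (H →L[ℂ] H) → (H →L[ℂ] H),
      IsQuantumOperation SA ∧
      (∀ T, IsTraceClass T → ∀ i j,
        ⟪b i, SA T (b j)⟫ = ⟪b i, A (b j)⟫ * ⟪b i, T (b j)⟫) ∧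
      ∀ B : H →L[ℂ] H,
        (∀ i j, ⟪b i, (adjoint B ∘L B) (b j)⟫ = ⟪b j, A (b i)⟫) →
        ∀ Ak : ι → H →L[ℂ] H,
          (∀ k j, Ak k (b j) = ⟪b k, B (b j)⟫ • b j) →
          (∃ S : H →L[ℂ] H, ∀ x, HasSum (fun k => adjoint (Ak k) (Ak k x)) (S x)) ∧
          ∀ T, IsTraceClass T → HasSum (fun k => Ak k ∘L T ∘L adjoint (Ak k)) (SA T) := by
  classical
  -- `A = C* C`; the coefficients `⟨C e_j, e_k⟩` are the matrix entries of an operator `B`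
  -- with `B* B = Aᵀ`, so that neither `B` nor the transpose has to be constructed.
  obtain ⟨C, hC⟩ := CStarAlgebra.nonneg_iff_eq_star_mul_self.1
    ((ContinuousLinearMap.nonneg_iff_isPositive A).2 hA)
  have hc : ∀ i j, HasSum (fun k => ⟪C (b i), b k⟫ * (starRingEnd ℂ) ⟪C (b j), b k⟫)
      ⟪b i, A (b j)⟫ := by
    intro i j
    have h := b.hasSum_inner_mul_inner (C (b i)) (C (b j))
    have h1 : ⟪b i, A (b j)⟫ = ⟪C (b i), C (b j)⟫ := by
      rw [hC, mul_apply_eq_comp, star_eq_adjoint, adjoint_inner_right]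
    simpa only [h1, inner_conj_symm] using h
  have hex : ∀ k, ∃ D : H →L[ℂ] H, ∀ j, D (b j) = ⟪C (b j), b k⟫ • b j := fun k => by
    refine exists_diagonal b _ ‖C‖ fun j => ?_
    have hn : ∀ l, ‖b l‖ = 1 := b.orthonormal.1
    calc ‖⟪C (b j), b k⟫‖ ≤ ‖C (b j)‖ * ‖b k‖ := norm_inner_le_norm _ _
      _ ≤ (‖C‖ * ‖b j‖) * ‖b k‖ := by gcongr; exact le_opNorm _ _
      _ = ‖C‖ := by simp [hn]
  choose D hD using hex
  obtain ⟨⟨S, hS⟩, hK⟩ := kraus_of_coeff b A hc hD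
  choose! R hR hRm using hK
  refine ⟨R, ⟨ι, inferInstance, D, S, hS, hR⟩, hRm, fun B hB Ak hAk => ?_⟩
  have hcB : ∀ i j, HasSum (fun k => ⟪b k, B (b i)⟫ * (starRingEnd ℂ) ⟪b k, B (b j)⟫)
      ⟪b i, A (b j)⟫ := by
    intro i j
    rw [← hB j i, comp_apply, adjoint_inner_right]
    have h := b.hasSum_inner_mul_inner (B (b j)) (B (b i))
    simpa only [inner_conj_symm, mul_comm] using h
  obtain ⟨hS', hK'⟩ := kraus_of_coeff b A hcB hAk
  refine ⟨hS', fun T hT => ?_⟩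
  -- Both Kraus series have the matrix entries `A_ij T_ij`, hence the same sum.
  obtain ⟨R', hR', hRm'⟩ := hK' T hT
  rwa [ext_matrix b fun i j => (hRm T hT i j).trans (hRm' i j).symm]

end PaperInf
end
end

section
/- Let H be a separable Hilbert space with orthonormal basis {e_j}, A ∈ B(H) positive, and S_A : T(H) → T(H) the Schur map S_A(T) = A ⊙ T. The following are equivalent: (i) some (equivalently, every) element of CM(S_A) is degradable; (ii) A is diagonal with respect to {e_j}, i.e., ⟨e_i, A e_j⟩ = 0 for all i ≠ j; (iii) S_A is strongly entanglement breaking. -/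
/-!
Write `e_i` for the basis vectors `b i`. Every Kraus operator `C_j` of the Schur map is diagonal,
`C_j e_i = d_{ji} e_i` (`schur_kraus_apply`), and `A` is the Gram matrix
`⟪e_i, A e_k⟫ = Σ_j d_{ji} conj d_{jk}` (`schur_kraus_gram`). With `f_i = (d_{ji})_j ∈ ℓ²`, the
dilation `e_i ↦ e_i ⊗ f_i` of `S_A` gives the complement
`Ψ(T) = Σ_i ⟪e_i, T e_i⟫ |f_i⟩⟨f_i|`.

Degradable complements imply `A` diagonal (`diagonal_of_degradable`): a copy of `S_A` is
complementary to `Ψ`, so `S_A` factors through `Ψ`. Since `Ψ` annihilates the matrix units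
`|e_i⟩⟨e_k|` with `i ≠ k`, so does `S_A`, and `S_A(|e_i⟩⟨e_k|) = ⟪e_i, A e_k⟫ |e_i⟩⟨e_k|`.

Diagonal `A` implies degradable complements (`degradable_of_diagonal`): any dilation of `S_A` is
`e_i ↦ e_i ⊗ f_i`, now with pairwise orthogonal `f_i`. A dilation of the complement `Ψ` then
satisfies `e_i ↦ f_i ⊗ g_i` with `g_i` a unit vector whenever `f_i ≠ 0`, and the quantum operation
with Kraus operators `|g_i⟩⟨f_i| / ‖f_i‖` degrades `Ψ`.

Diagonal `A` implies strong entanglement breaking (`seb_of_diagonal`): `id ⊗ S_A` multiplies the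
`(i, k)` block of `ρ` by `⟪e_i, A e_k⟫` (`inner_idTensor_schur`), so only the diagonal blocks
`R_i` survive and the output is `Σ_i ⟪e_i, A e_i⟫ R_i ⊗ |e_i⟩⟨e_i|`.

Strong entanglement breaking implies `A` diagonal (`diagonal_of_seb`): apply `id ⊗ S_A` to the pure
state along `c_0 ⊗ e_i + c_1 ⊗ e_k`. The output has zero expectation at `c_0 ⊗ e_k`; by positivity
each product term of a separable decomposition then has zero entry between `c_0 ⊗ e_i` and
`c_1 ⊗ e_k` (`CDSeparable.inner_eq_zero`), while that entry of the output is a nonzero multiple of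
`⟪e_i, A e_k⟫`.
-/

noncomputable section

namespace PaperInf

open scoped ComplexInnerProductSpace ComplexOrder
open ContinuousLinearMap TopologicalSpace

variable {H H1 H2 H3 H4 K W W' : Type*}
  [NormedAddCommGroup H] [InnerProductSpace ℂ H] [CompleteSpace H]
  [NormedAddCommGroup H1] [InnerProductSpace ℂ H1] [CompleteSpace H1]
  [NormedAddCommGroup H2] [InnerProductSpace ℂ H2] [CompleteSpace H2]
  [NormedAddCommGroup H3] [InnerProductSpace ℂ H3] [CompleteSpace H3]
  [NormedAddCommGroup H4] [InnerProductSpace ℂ H4] [CompleteSpace H4]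
  [NormedAddCommGroup K] [InnerProductSpace ℂ K] [CompleteSpace K]
  [NormedAddCommGroup W] [InnerProductSpace ℂ W] [CompleteSpace W]
  [NormedAddCommGroup W'] [InnerProductSpace ℂ W'] [CompleteSpace W']

set_option linter.unusedSectionVars false

lemma hasSum_of_eq {α E : Type*} [AddCommMonoid E] [TopologicalSpace E] {f g : α → E} {a c : E}
    (h : HasSum f a) (hfg : ∀ j, g j = f j) (hac : c = a) : HasSum g c := by
  rw [hac, funext hfg]; exact h

/-! ### Rank-one operators -/

section Ketbra

@[simp] lemma ketbra_apply (x : H2) (y v : H1) : ketbra x y v = ⟪y, v⟫ • x := rfl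

lemma norm_ketbra (x : H2) (y : H1) : ‖ketbra x y‖ = ‖y‖ * ‖x‖ := by
  simp [ketbra, ContinuousLinearMap.norm_smulRight_apply]

lemma adjoint_ketbra (x : H2) (y : H1) : adjoint (ketbra x y) = ketbra y x := by
  symm
  rw [ContinuousLinearMap.eq_adjoint_iff]
  intro u v
  simp [inner_smul_left, inner_smul_right, mul_comm]

lemma isTraceClass_ketbra (x y : H) : IsTraceClass (ketbra x y) := by
  refine ⟨fun n => if n = 0 then x else 0, fun n => if n = 0 then y else 0, ?_, fun v => ?_⟩
  · refine summable_of_ne_finset_zero (s := {0}) ?_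
    intro n hn
    have : n ≠ 0 := by simpa using hn
    simp [this]
  · convert hasSum_ite_eq 0 (ketbra x y v) using 2 with n
    by_cases h : n = 0 <;> simp [h]

end Ketbra

/-! ### Kraus families acting on trace-class operators -/

section Kraus

variable {J : Type*}

lemma kraus_hasSum_sq {C : J → H1 →L[ℂ] H2} {S : H1 →L[ℂ] H1}
    (hS : ∀ x, HasSum (fun j => adjoint (C j) (C j x)) (S x)) (x : H1) :
    HasSum (fun j => ‖C j x‖ ^ 2) (RCLike.re ⟪x, S x⟫) := by
  have h1 := ((hS x).mapL (innerSL ℂ x)).mapL RCLike.reCLM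
  refine hasSum_of_eq h1 (fun j => ?_) rfl
  rw [innerSL_apply_apply, ContinuousLinearMap.adjoint_inner_right]
  exact (inner_self_eq_norm_sq (𝕜 := ℂ) _).symm

lemma kraus_summable_sq {C : J → H1 →L[ℂ] H2} {S : H1 →L[ℂ] H1}
    (hS : ∀ x, HasSum (fun j => adjoint (C j) (C j x)) (S x)) (x : H1) :
    Summable (fun j => ‖C j x‖ ^ 2) := (kraus_hasSum_sq hS x).summable

lemma kraus_tsum_sq_le {C : J → H1 →L[ℂ] H2} {S : H1 →L[ℂ] H1}
    (hS : ∀ x, HasSum (fun j => adjoint (C j) (C j x)) (S x)) (x : H1) :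
    ∑' j, ‖C j x‖ ^ 2 ≤ ‖S‖ * ‖x‖ ^ 2 := by
  rw [(kraus_hasSum_sq hS x).tsum_eq]
  calc RCLike.re ⟪x, S x⟫ ≤ ‖x‖ * ‖S x‖ := re_inner_le_norm _ _
    _ ≤ ‖x‖ * (‖S‖ * ‖x‖) := by gcongr; exact S.le_opNorm x
    _ = _ := by ring

/-- Cauchy–Schwarz over the Kraus index. -/
lemma kraus_mul_bound {C : J → H1 →L[ℂ] H2} {S : H1 →L[ℂ] H1}
    (hS : ∀ x, HasSum (fun j => adjoint (C j) (C j x)) (S x)) (x y : H1) :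
    Summable (fun j => ‖C j x‖ * ‖C j y‖) ∧
      ∑' j, ‖C j x‖ * ‖C j y‖ ≤ ‖S‖ * (‖x‖ * ‖y‖) := by
  have hpq : (2 : ℝ).HolderConjugate 2 := by
    rw [Real.holderConjugate_iff]; norm_num
  have h := Real.summable_and_inner_le_Lp_mul_Lq_tsum_of_nonneg hpq
    (f := fun j => ‖C j x‖) (g := fun j => ‖C j y‖) (fun _ => norm_nonneg _)
    (fun _ => norm_nonneg _) (by simpa using kraus_summable_sq hS x)
    (by simpa using kraus_summable_sq hS y)
  refine ⟨h.1, h.2.trans ?_⟩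
  simp only [Real.rpow_two, ← Real.sqrt_eq_rpow]
  calc _ ≤ √(‖S‖ * ‖x‖ ^ 2) * √(‖S‖ * ‖y‖ ^ 2) := by
        gcongr
        · exact kraus_tsum_sq_le hS x
        · exact kraus_tsum_sq_le hS y
    _ = _ := by
        rw [Real.sqrt_mul (norm_nonneg _), Real.sqrt_mul (norm_nonneg _),
          Real.sqrt_sq (norm_nonneg _), Real.sqrt_sq (norm_nonneg _)]
        have := Real.mul_self_sqrt (norm_nonneg S)
        linear_combination (‖x‖ * ‖y‖) * this

/-- Joint summability over a Kraus family and a nuclear decomposition; it licenses every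
interchange of sums below. -/
lemma kraus_summable_prod {C : J → H1 →L[ℂ] H2} {S : H1 →L[ℂ] H1}
    (hS : ∀ x, HasSum (fun j => adjoint (C j) (C j x)) (S x)) {x y : ℕ → H1}
    (hxy : Summable (fun n => ‖x n‖ * ‖y n‖)) :
    Summable (fun q : J × ℕ => ‖C q.1 (x q.2)‖ * ‖C q.1 (y q.2)‖) := by
  rw [← (Equiv.prodComm ℕ J).summable_iff]
  rw [summable_prod_of_nonneg (fun q => by simp; positivity)]
  refine ⟨fun n => (kraus_mul_bound hS (x n) (y n)).1, ?_⟩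
  refine Summable.of_nonneg_of_le (fun n => tsum_nonneg fun j => by simp; positivity)
    (fun n => (kraus_mul_bound hS (x n) (y n)).2) (hxy.mul_left _)

lemma norm_conj_le_tsum {T : H1 →L[ℂ] H1} {x y : ℕ → H1}
    (hT : ∀ v, HasSum (fun n => ⟪y n, v⟫ • x n) (T v)) (C : H1 →L[ℂ] H2)
    (hs : Summable (fun n => ‖C (x n)‖ * ‖C (y n)‖)) :
    ‖C ∘L T ∘L adjoint C‖ ≤ ∑' n, ‖C (x n)‖ * ‖C (y n)‖ := by
  refine ContinuousLinearMap.opNorm_le_bound _ (tsum_nonneg fun n => by positivity) fun v => ?_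
  have h := (hT (adjoint C v)).mapL C
  have hb : ∀ n, ‖C (⟪y n, adjoint C v⟫ • x n)‖ ≤ ‖C (x n)‖ * ‖C (y n)‖ * ‖v‖ := by
    intro n
    rw [map_smul, norm_smul, ContinuousLinearMap.adjoint_inner_right]
    calc _ ≤ (‖C (y n)‖ * ‖v‖) * ‖C (x n)‖ := by gcongr; exact norm_inner_le_norm _ _
      _ = _ := by ring
  have := h.norm_le_of_bounded (hs.mul_right ‖v‖).hasSum hb
  rwa [tsum_mul_right] at this

/-- A Kraus series evaluated at a trace-class operator converges absolutely in operator norm. -/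
lemma kraus_summable_norm {C : J → H1 →L[ℂ] H2} {S : H1 →L[ℂ] H1}
    (hS : ∀ x, HasSum (fun j => adjoint (C j) (C j x)) (S x)) {T : H1 →L[ℂ] H1}
    (hT : IsTraceClass T) : Summable (fun j => ‖C j ∘L T ∘L adjoint (C j)‖) := by
  obtain ⟨x, y, hxy, hT⟩ := hT
  have h := kraus_summable_prod hS hxy
  have h' := (summable_prod_of_nonneg (fun q => by simp; positivity)).1 h
  exact Summable.of_nonneg_of_le (fun _ => norm_nonneg _)
    (fun j => norm_conj_le_tsum hT (C j) (h'.1 j)) h'.2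

end Kraus

/-! ### Basis independence of the trace -/

section Nuclear

variable {J : Type*}

lemma basis_kraus (b : HilbertBasis J ℂ H) (x : H) :
    HasSum (fun j => adjoint (innerSL ℂ (b j)) (innerSL ℂ (b j) x))
      ((ContinuousLinearMap.id ℂ H) x) := by
  refine hasSum_of_eq (b.hasSum_repr x) (fun j => ?_) rfl
  refine ext_inner_left ℂ fun v => ?_
  rw [ContinuousLinearMap.adjoint_inner_right, b.repr_apply_apply]
  simp [inner_smul_right, mul_comm]

/-- Basis independence of the trace, in the form `Σ_κ ⟪P κ, T (Q κ)⟫ = Σ_n ⟪Q* y_n, P* x_n⟫` for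
`T = Σ_n |x_n⟩⟨y_n|`. -/
lemma hasSum_basis_nuclear (b : HilbertBasis J ℂ K) {T : H →L[ℂ] H} {x y : ℕ → H}
    (hxy : Summable (fun n => ‖x n‖ * ‖y n‖))
    (hT : ∀ v, HasSum (fun n => ⟪y n, v⟫ • x n) (T v)) (P Q : K →L[ℂ] H) :
    HasSum (fun j => ⟪P (b j), T (Q (b j))⟫) (∑' n, ⟪adjoint Q (y n), adjoint P (x n)⟫) := by
  have hxy' : Summable (fun n => ‖adjoint P (x n)‖ * ‖adjoint Q (y n)‖) := by
    refine Summable.of_nonneg_of_le (fun n => by positivity) (fun n => ?_)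
      (hxy.mul_left (‖adjoint P‖ * ‖adjoint Q‖))
    calc _ ≤ (‖adjoint P‖ * ‖x n‖) * (‖adjoint Q‖ * ‖y n‖) := by
          gcongr <;> exact ContinuousLinearMap.le_opNorm _ _
      _ = _ := by ring
  obtain ⟨F, hFdef⟩ : ∃ F : J × ℕ → ℂ, ∀ j n,
      F (j, n) = ⟪adjoint Q (y n), b j⟫ * ⟪b j, adjoint P (x n)⟫ := 
    ⟨fun q => ⟪adjoint Q (y q.2), b q.1⟫ * ⟪b q.1, adjoint P (x q.2)⟫, fun _ _ => rfl⟩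
  have hF : Summable F := by
    refine Summable.of_norm ?_
    refine (kraus_summable_prod (basis_kraus b) hxy').congr fun q => ?_
    obtain ⟨j, n⟩ := q
    rw [hFdef, norm_mul, mul_comm, norm_inner_symm (adjoint Q _), innerSL_apply_apply,
      innerSL_apply_apply]
  have h1 : ∀ j, HasSum (fun n => F (j, n)) ⟪P (b j), T (Q (b j))⟫ := by
    intro j
    have h := (hT (Q (b j))).mapL (innerSL ℂ (P (b j)))
    simp only [innerSL_apply_apply] at h
    refine hasSum_of_eq h (fun n => ?_) rfl
    rw [hFdef, ContinuousLinearMap.adjoint_inner_left, ContinuousLinearMap.adjoint_inner_right,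
      inner_smul_right]
  have h2 : ∀ n, HasSum (fun j => F (j, n)) ⟪adjoint Q (y n), adjoint P (x n)⟫ := fun n =>
    hasSum_of_eq (b.hasSum_inner_mul_inner _ _) (fun j => hFdef j n) rfl
  have h3 := hF.hasSum.prod_fiberwise h1
  have h5 : HasSum (fun q : ℕ × J => F (q.2, q.1)) (∑' q, F q) :=
    (Equiv.prodComm ℕ J).hasSum_iff.2 hF.hasSum
  have h4 := h5.prod_fiberwise h2
  rwa [h4.tsum_eq]

end Nuclear

/-! ### Tensor products and orthonormal bases -/

namespace TensorStruct

/-- The same Hilbert space, regarded as the tensor product with the factors exchanged. -/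
def swap (ts : TensorStruct K H W) : TensorStruct H K W where
  t := fun y x => ts.t x y
  inner_t := fun y y' x x' => by rw [ts.inner_t, mul_comm]
  dense_t := by
    rw [← ts.dense_t]
    congr 2
    ext w
    exact exists_comm

lemma swap_t (ts : TensorStruct K H W) (x : K) (y : H) : ts.swap.t y x = ts.t x y := rfl

lemma t_add (ts : TensorStruct K H W) (x : K) (y y' : H) :
    ts.t x (y + y') = ts.t x y + ts.t x y' := by
  rw [← sub_eq_zero, ← inner_self_eq_zero (𝕜 := ℂ)]
  simp only [inner_sub_left, inner_sub_right, inner_add_left, inner_add_right, ts.inner_t]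
  ring

lemma t_smul (ts : TensorStruct K H W) (x : K) (c : ℂ) (y : H) :
    ts.t x (c • y) = c • ts.t x y := by
  rw [← sub_eq_zero, ← inner_self_eq_zero (𝕜 := ℂ)]
  simp only [inner_sub_left, inner_sub_right, inner_smul_left, inner_smul_right, ts.inner_t]
  ring

lemma norm_t (ts : TensorStruct K H W) (x : K) (y : H) : ‖ts.t x y‖ = ‖x‖ * ‖y‖ := by
  have h := ts.inner_t x x y y
  rw [inner_self_eq_norm_sq_to_K, inner_self_eq_norm_sq_to_K, inner_self_eq_norm_sq_to_K] at h
  have h' : ‖ts.t x y‖ ^ 2 = (‖x‖ * ‖y‖) ^ 2 := by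
    rw [mul_pow]; exact_mod_cast h
  exact (pow_left_inj₀ (norm_nonneg _) (by positivity) two_ne_zero).1 h'

/-- The bounded operator `y ↦ x ⊗ y`. -/
def tL (ts : TensorStruct K H W) (x : K) : H →L[ℂ] W :=
  LinearMap.mkContinuous
    { toFun := ts.t x, map_add' := ts.t_add x, map_smul' := ts.t_smul x } ‖x‖
    (fun y => (ts.norm_t x y).le)

@[simp] lemma tL_apply (ts : TensorStruct K H W) (x : K) (y : H) : ts.tL x y = ts.t x y := rfl

lemma norm_tL_le (ts : TensorStruct K H W) (x : K) : ‖ts.tL x‖ ≤ ‖x‖ :=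
  LinearMap.mkContinuous_norm_le _ (norm_nonneg _) _

lemma add_t (ts : TensorStruct K H W) (x x' : K) (y : H) :
    ts.t (x + x') y = ts.t x y + ts.t x' y := ts.swap.t_add y x x'

lemma smul_t (ts : TensorStruct K H W) (c : ℂ) (x : K) (y : H) :
    ts.t (c • x) y = c • ts.t x y := ts.swap.t_smul y c x

lemma eq_of_inner (ts : TensorStruct K H W) {w w' : W}
    (h : ∀ x y, ⟪ts.t x y, w⟫ = ⟪ts.t x y, w'⟫) : w = w' := by
  have hd : Dense ((Submodule.span ℂ {w : W | ∃ x y, w = ts.t x y} : Submodule ℂ W) : Set W) :=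
    Submodule.dense_iff_topologicalClosure_eq_top.2 ts.dense_t
  refine hd.eq_of_inner_right (𝕜 := ℂ) fun v hv => ?_
  induction hv using Submodule.span_induction with
  | mem v hv => obtain ⟨x, y, rfl⟩ := hv; exact h x y
  | zero => simp
  | add u v _ _ hu hv => rw [inner_add_left, inner_add_left, hu, hv]
  | smul c u _ hu => rw [inner_smul_left, inner_smul_left, hu]

end TensorStruct

lemma basis_eq_of_inner {J : Type*} (b : HilbertBasis J ℂ H) {v w : H}
    (h : ∀ j, ⟪b j, v⟫ = ⟪b j, w⟫) : v = w := by
  refine b.repr.injective ?_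
  ext j
  simpa [b.repr_apply_apply] using h j

lemma basis_clm_ext {J : Type*} (b : HilbertBasis J ℂ H) {P Q : H →L[ℂ] H2}
    (h : ∀ j, P (b j) = Q (b j)) : P = Q := by
  ext v
  have h1 := (b.hasSum_repr v).mapL P
  have h2 := (b.hasSum_repr v).mapL Q
  refine h1.unique (hasSum_of_eq h2 (fun j => ?_) rfl)
  simp [h]

lemma basis_inner_self {J : Type*} (b : HilbertBasis J ℂ H) (i : J) : ⟪b i, b i⟫ = 1 := by
  simp [inner_self_eq_norm_sq_to_K, b.orthonormal.1 i]

lemma basis_inner_ne {J : Type*} (b : HilbertBasis J ℂ H) {i j : J} (h : i ≠ j) :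
    ⟪b i, b j⟫ = 0 := b.orthonormal.2 h

namespace TensorStruct

lemma eq_of_inner_basis {J : Type*} (ts : TensorStruct K H W) (b : HilbertBasis J ℂ K) {w w' : W}
    (h : ∀ j y, ⟪ts.t (b j) y, w⟫ = ⟪ts.t (b j) y, w'⟫) : w = w' := by
  refine ts.eq_of_inner fun x y => ?_
  have : adjoint (ts.swap.tL y) w = adjoint (ts.swap.tL y) w' := by
    refine basis_eq_of_inner b fun j => ?_
    simpa [ContinuousLinearMap.adjoint_inner_right, swap_t] using h j y
  have h2 := congrArg (fun v => ⟪x, v⟫) this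
  simpa [ContinuousLinearMap.adjoint_inner_right, swap_t] using h2

/-- Two operators on `K ⊗ H` with the same matrix entries on `K ⊗ b j` are equal. -/
lemma clm_ext_basis {J : Type*} (ts : TensorStruct K H W) (b : HilbertBasis J ℂ H)
    {P Q : W →L[ℂ] W}
    (h : ∀ x j x' j', ⟪ts.t x (b j), P (ts.t x' (b j'))⟫ = ⟪ts.t x (b j), Q (ts.t x' (b j'))⟫) :
    P = Q := by
  have h1 : ∀ x' j', P (ts.t x' (b j')) = Q (ts.t x' (b j')) := fun x' j' =>
    ts.swap.eq_of_inner_basis b fun j y => h y j x' j'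
  have h3 : adjoint (P - Q) = 0 := by
    ext w
    refine ts.swap.eq_of_inner_basis b fun j y => ?_
    rw [ContinuousLinearMap.adjoint_inner_right]
    simp [swap_t, h1]
  have h4 : P - Q = 0 := by
    have := congrArg adjoint h3
    simpa using this
  exact sub_eq_zero.1 h4

end TensorStruct

/-! ### Partial traces of rank-one operators -/

section PartialTrace

lemma conj_ketbra (B : H1 →L[ℂ] H2) (x y : H1) :
    B ∘L ketbra x y ∘L adjoint B = ketbra (B x) (B y) := by
  ext v
  simp [ContinuousLinearMap.adjoint_inner_right]

/-- If `tr_{H3} |w⟩⟨w|` vanishes on `u^⊥`, then `w` is a product vector `u ⊗ f`. -/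
lemma exists_eq_t_of_partialTrace (ts : TensorStruct H2 H3 W) {w : W} {P : H2 →L[ℂ] H2}
    (hP : IsPartialTraceRight ts (ketbra w w) P) {u : H2}
    (hu : ∀ x, ⟪u, x⟫ = 0 → ⟪x, P x⟫ = 0) : ∃ f, w = ts.t u f := by
  obtain ⟨J, _, b, hb⟩ := hP
  have h0 : ∀ x, ⟪u, x⟫ = 0 → ∀ y, ⟪ts.t x y, w⟫ = 0 := by
    intro x hx y
    have h1 := (hb x x).mapL RCLike.reCLM
    rw [hu x hx] at h1
    have h2 : HasSum (fun i => ‖⟪ts.t x (b i), w⟫‖ ^ 2) 0 := by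
      refine hasSum_of_eq h1 (fun i => ?_) (by simp)
      rw [ketbra_apply, inner_smul_right, ← inner_conj_symm w, RCLike.conj_mul]
      simp [← Complex.ofReal_pow]
    have h3 := (hasSum_zero_iff_of_nonneg (fun i => by positivity)).1 h2
    have h4 : adjoint (ts.tL x) w = 0 := by
      refine basis_eq_of_inner b fun i => ?_
      have := congrFun h3 i
      simpa [ContinuousLinearMap.adjoint_inner_right] using this
    have := congrArg (fun v => ⟪y, v⟫) h4
    simpa [ContinuousLinearMap.adjoint_inner_right] using this
  by_cases hu0 : u = 0
  · refine ⟨0, ts.eq_of_inner fun x y => ?_⟩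
    rw [h0 x (by simp [hu0]), ts.inner_t]
    simp
  have huu : ⟪u, u⟫ ≠ 0 := by simpa using hu0
  refine ⟨(⟪u, u⟫)⁻¹ • adjoint (ts.tL u) w, ts.eq_of_inner fun x y => ?_⟩
  obtain ⟨c, z, hz, rfl⟩ : ∃ (c : ℂ) (z : H2), ⟪u, z⟫ = 0 ∧ x = c • u + z := by
    refine ⟨⟪u, x⟫ / ⟪u, u⟫, x - (⟪u, x⟫ / ⟪u, u⟫) • u, ?_, by abel⟩
    rw [inner_sub_right, inner_smul_right]; field_simp; simp
  have hz' : ⟪z, u⟫ = 0 := by rw [← inner_conj_symm, hz, map_zero]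
  rw [ts.add_t, inner_add_left, inner_add_left, h0 z hz y, ts.inner_t z u, hz', zero_mul,
    ts.smul_t, inner_smul_left, inner_smul_left, ts.inner_t, inner_smul_right,
    ContinuousLinearMap.adjoint_inner_right, ts.tL_apply, ← mul_assoc ⟪u, u⟫,
    mul_inv_cancel₀ huu, one_mul]

lemma IsPartialTraceRight.ketbra_eq (ts : TensorStruct H2 H3 W) {x x' : H2} {y y' : H3}
    {P : H2 →L[ℂ] H2} (hP : IsPartialTraceRight ts (ketbra (ts.t x y) (ts.t x' y')) P) :
    P = ⟪y', y⟫ • ketbra x x' := by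
  obtain ⟨J, _, b, hb⟩ := hP
  ext v
  refine ext_inner_left ℂ fun u => ?_
  refine (hb u v).unique ?_
  refine hasSum_of_eq ((b.hasSum_inner_mul_inner y' y).mul_left (⟪u, x⟫ * ⟪x', v⟫)) (fun i => ?_) ?_
  · rw [ketbra_apply, inner_smul_right, ts.inner_t, ts.inner_t]; ring
  · simp only [_root_.smul_apply, ketbra_apply, inner_smul_right]; ring

lemma IsPartialTraceLeft.swap {ts : TensorStruct H2 H3 W} {S : W →L[ℂ] W} {P : H3 →L[ℂ] H3}
    (h : IsPartialTraceLeft ts S P) : IsPartialTraceRight ts.swap S P := h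

lemma IsPartialTraceRight.swap {ts : TensorStruct H2 H3 W} {S : W →L[ℂ] W} {P : H2 →L[ℂ] H2}
    (h : IsPartialTraceRight ts S P) : IsPartialTraceLeft ts.swap S P := h

end PartialTrace

/-! ### Complements of a diagonal Schur map are degradable -/

section DiagonalToDegradable

/-- The projection onto the closed span of an orthonormal family, as a strongly convergent sum. -/
lemma exists_hasSum_orthonormal {J : Type*} {u : J → K} (hu : Orthonormal ℂ u) :
    ∃ S : K →L[ℂ] K, ∀ x, HasSum (fun j => ⟪u j, x⟫ • u j) (S x) := by
  classical
  let V := hu.orthogonalFamily.linearIsometry.toContinuousLinearMap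
  refine ⟨V ∘L adjoint V, fun x => ?_⟩
  refine hasSum_of_eq (hu.orthogonalFamily.hasSum_linearIsometry (adjoint V x)) (fun j => ?_) rfl
  have h1 : (adjoint V x) j = ⟪u j, x⟫ := by
    have h2 := lp.inner_single_left (𝕜 := ℂ) j (1 : ℂ) (adjoint V x)
    rw [ContinuousLinearMap.adjoint_inner_right] at h2
    have h3 : V (lp.single 2 j (1 : ℂ)) = u j := by
      simp [V]
    rw [h3] at h2
    rw [h2]
    simp
  rw [h1]
  simp

/-- The Schur map multiplies the matrix unit `|e_i⟩⟨e_k|` by the corresponding entry of `A`. -/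
lemma schur_ketbra {ι : Type*} (b : HilbertBasis ι ℂ H) (A : H →L[ℂ] H)
    (SA : (H →L[ℂ] H) → (H →L[ℂ] H))
    (hSA : ∀ T, IsTraceClass T → ∀ i j,
      ⟪b i, SA T (b j)⟫ = ⟪b i, A (b j)⟫ * ⟪b i, T (b j)⟫) (i k : ι) :
    SA (ketbra (b i) (b k)) = ⟪b i, A (b k)⟫ • ketbra (b i) (b k) := by
  refine basis_clm_ext b fun l => basis_eq_of_inner b fun m => ?_
  rw [hSA _ (isTraceClass_ketbra _ _)]
  simp only [_root_.smul_apply, ketbra_apply, inner_smul_right]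
  by_cases hl : k = l
  · by_cases hm : m = i
    · rw [hl, hm]
    · rw [basis_inner_ne b hm]; ring
  · rw [basis_inner_ne b hl]; ring

lemma basis_inner_smul_self {ι : Type*} (b : HilbertBasis ι ℂ H) (v : H) (i : ι)
    (h : ∀ k, k ≠ i → ⟪b k, v⟫ = 0) : v = ⟪b i, v⟫ • b i := by
  refine basis_eq_of_inner b fun k => ?_
  rw [inner_smul_right]
  by_cases hk : k = i
  · rw [hk, basis_inner_self, mul_one]
  · rw [h k hk, basis_inner_ne b hk, mul_zero]

/-- For diagonal `A`, any dilation of `S_A` has the form `e_i ↦ e_i ⊗ f_i` with pairwise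
orthogonal `f_i`, and any dilation of its complement `Ψ` has the form `e_i ↦ f_i ⊗ g_i`.
Measuring in the directions of the `f_i` and preparing `g_i` degrades `Ψ`. -/
theorem degradable_of_diagonal {ι : Type} [Countable ι] (b : HilbertBasis ι ℂ H) (A : H →L[ℂ] H)
    (SA : (H →L[ℂ] H) → (H →L[ℂ] H))
    (hSA : ∀ T, IsTraceClass T → ∀ i j,
      ⟪b i, SA T (b j)⟫ = ⟪b i, A (b j)⟫ * ⟪b i, T (b j)⟫)
    (hdiag : ∀ i j, i ≠ j → ⟪b i, A (b j)⟫ = 0)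
    (E : SepHilbert) (Ψ : (H →L[ℂ] H) → (E.carrier →L[ℂ] E.carrier))
    (hΨ : IsComplementary Ψ SA) : Degradable Ψ := by
  classical
  obtain ⟨W, ts, B, hB⟩ := hΨ
  rintro E' Ψ' - ⟨W', ts', C, hC⟩
  have hk := schur_ketbra b A SA hSA
  have hBk : ∀ i k, IsPartialTraceRight ts (ketbra (B (b i)) (B (b k)))
      (SA (ketbra (b i) (b k))) ∧ IsPartialTraceRight ts.swap (ketbra (B (b i)) (B (b k)))
      (Ψ (ketbra (b i) (b k))) := by
    intro i k
    have := hB _ (isTraceClass_ketbra (b i) (b k))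
    rw [conj_ketbra] at this
    exact this
  have hCk : ∀ i k, IsPartialTraceRight ts' (ketbra (C (b i)) (C (b k)))
      (Ψ (ketbra (b i) (b k))) := by
    intro i k
    have := hC _ (isTraceClass_ketbra (b i) (b k))
    rw [conj_ketbra] at this
    exact this.1
  -- `B e_i = e_i ⊗ f_i` with pairwise orthogonal `f_i`.
  have hf : ∀ i, ∃ f, B (b i) = ts.t (b i) f := by
    intro i
    refine exists_eq_t_of_partialTrace ts (hBk i i).1 fun x hx => ?_
    simp [hk, hx]
  choose f hf using hf
  have horth : ∀ i k, i ≠ k → ⟪f i, f k⟫ = 0 := by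
    intro i k hik
    have h1 := (hBk k i).1
    rw [hf, hf] at h1
    have h2 := h1.ketbra_eq
    rw [hk, hdiag k i hik.symm, zero_smul] at h2
    have h3 := congrArg (fun P : H →L[ℂ] H => ⟪b k, P (b i)⟫) h2
    simp only [_root_.smul_apply, ketbra_apply, inner_smul_right, basis_inner_self, mul_one,
      _root_.zero_apply, inner_zero_right] at h3
    exact h3.symm
  have hΨk : ∀ i, Ψ (ketbra (b i) (b i)) = ketbra (f i) (f i) := by
    intro i
    have h1 := (hBk i i).2
    rw [hf, ← ts.swap_t] at h1
    rw [h1.ketbra_eq, basis_inner_self, one_smul]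
  -- `C e_i = f_i ⊗ g_i` with `g_i` a unit vector whenever `f_i ≠ 0`.
  have hg : ∀ i, ∃ g, C (b i) = ts'.t (f i) g := by
    intro i
    refine exists_eq_t_of_partialTrace ts' (hCk i i) fun x hx => ?_
    simp [hΨk, hx]
  choose g hg using hg
  have hgn : ∀ i, f i ≠ 0 → ⟪g i, g i⟫ = 1 := by
    intro i hi
    have h1 := hCk i i
    rw [hg] at h1
    have h2 := h1.ketbra_eq
    rw [hΨk] at h2
    have h3 := congrArg (fun P : E.carrier →L[ℂ] E.carrier => ⟪f i, P (f i)⟫) h2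
    simp only [_root_.smul_apply, ketbra_apply, inner_smul_right] at h3
    have h4 : ⟪f i, f i⟫ ≠ 0 := by simpa using hi
    exact (mul_right_cancel₀ (mul_ne_zero h4 h4) ((one_mul _).trans h3)).symm
  let ι' := {i : ι // f i ≠ 0}
  let u : ι' → E.carrier := fun i => ((‖f i‖⁻¹ : ℝ) : ℂ) • f i
  have hu : Orthonormal ℂ u := by
    refine ⟨fun i => ?_, fun i k hik => ?_⟩
    · have : ‖f i‖ ≠ 0 := by simpa using i.2
      simp [u, norm_smul, this]
    · have : (i : ι) ≠ k := fun h => hik (Subtype.ext h)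
      simp [u, inner_smul_left, inner_smul_right, horth _ _ this]
  obtain ⟨S, hS⟩ := exists_hasSum_orthonormal hu
  let D : ι' → E.carrier →L[ℂ] E'.carrier := fun i => ketbra (g i) (u i)
  have hD : ∀ x, HasSum (fun i => adjoint (D i) (D i x)) (S x) := by
    intro x
    refine hasSum_of_eq (hS x) (fun i => ?_) rfl
    simp only [D, adjoint_ketbra, ketbra_apply, inner_smul_right, hgn i i.2, mul_one]
  refine ⟨fun R => ∑' i, D i ∘L R ∘L adjoint (D i), ⟨ι', inferInstance, D, S, hD,
    fun T hT => (kraus_summable_norm hD hT).of_norm.hasSum⟩, fun T hT => ?_⟩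
  obtain ⟨x, y, hxy, hTxy⟩ := id hT
  have hBadj : ∀ i v, adjoint B (ts.t v (f i)) = (⟪b i, v⟫ * ⟪f i, f i⟫) • b i := by
    intro i v
    have h1 : ∀ k, ⟪b k, adjoint B (ts.t v (f i))⟫ = ⟪b k, v⟫ * ⟪f k, f i⟫ := by
      intro k
      rw [ContinuousLinearMap.adjoint_inner_right, hf, ts.inner_t]
    rw [basis_inner_smul_self b (adjoint B (ts.t v (f i))) i
      (fun k hki => by rw [h1, horth k i hki, mul_zero]), h1]
  have hCadj : ∀ i v, adjoint C (ts'.t (f i) v) = (⟪f i, f i⟫ * ⟪g i, v⟫) • b i := by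
    intro i v
    have h1 : ∀ k, ⟪b k, adjoint C (ts'.t (f i) v)⟫ = ⟪f k, f i⟫ * ⟪g k, v⟫ := by
      intro k
      rw [ContinuousLinearMap.adjoint_inner_right, hg, ts'.inner_t]
    rw [basis_inner_smul_self b (adjoint C (ts'.t (f i) v)) i
      (fun k hki => by rw [h1, horth k i hki, zero_mul]), h1]
  have hΨf : ∀ i, ⟪f i, Ψ T (f i)⟫ = ⟪f i, f i⟫ * ⟪f i, f i⟫ * ⟪b i, T (b i)⟫ := by
    intro i
    obtain ⟨J, _, κ, hκ⟩ := (hB T hT).2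
    refine (hκ (f i) (f i)).unique ?_
    refine hasSum_of_eq ((κ.hasSum_inner_mul_inner (b i) (b i)).mul_left
      (⟪f i, f i⟫ * ⟪f i, f i⟫ * ⟪b i, T (b i)⟫)) (fun j => ?_) (by rw [basis_inner_self, mul_one])
    rw [ContinuousLinearMap.comp_apply, ContinuousLinearMap.comp_apply,
      ← ContinuousLinearMap.adjoint_inner_left, hBadj, map_smul, inner_smul_left,
      inner_smul_right, map_mul, inner_conj_symm, inner_conj_symm]
    ring
  have hDT : ∀ i : ι', D i ∘L Ψ T ∘L adjoint (D i) =
      (⟪f i, f i⟫ * ⟪b i, T (b i)⟫) • ketbra (g i) (g i) := by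
    intro i
    have h4 : (‖f i‖ : ℂ) ≠ 0 := by simpa using i.2
    have h5 : ⟪u i, Ψ T (u i)⟫ = ⟪f i, f i⟫ * ⟪b i, T (b i)⟫ := by
      simp only [u]
      rw [map_smul, inner_smul_left, inner_smul_right, hΨf, inner_self_eq_norm_sq_to_K,
        Complex.conj_ofReal]
      push_cast
      simp only [Complex.coe_algebraMap]
      field_simp
    ext v
    simp only [D, ContinuousLinearMap.comp_apply, adjoint_ketbra, ketbra_apply, map_smul,
      h5, _root_.smul_apply, smul_smul]
    ring_nf
  have hfB : ∀ i, ‖⟪f i, f i⟫‖ ≤ ‖B‖ ^ 2 := by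
    intro i
    have h1 : ‖f i‖ = ‖B (b i)‖ := by rw [hf, ts.norm_t, b.orthonormal.1, one_mul]
    have h2 : ‖B (b i)‖ ≤ ‖B‖ := by
      simpa [b.orthonormal.1 i] using B.le_opNorm (b i)
    rw [inner_self_eq_norm_sq_to_K]
    simp only [norm_pow, Complex.coe_algebraMap, Complex.norm_real, norm_norm]
    rw [h1]
    gcongr
  have hsum : Summable (fun i => D i ∘L Ψ T ∘L adjoint (D i)) := by
    refine Summable.of_norm ?_
    have h1 := (hasSum_basis_nuclear b hxy hTxy (ContinuousLinearMap.id ℂ H)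
      (ContinuousLinearMap.id ℂ H)).summable.norm
    have h2 := (h1.mul_left (‖B‖ ^ 2)).comp_injective (Subtype.val_injective (p := fun i => f i ≠ 0))
    refine Summable.of_nonneg_of_le (fun _ => norm_nonneg _) (fun i => ?_) h2
    have h3 : ‖g i‖ * ‖g i‖ = 1 := by
      have := hgn i i.2
      rw [← sq, ← inner_self_eq_norm_sq (𝕜 := ℂ), this, RCLike.one_re]
    rw [hDT, norm_smul, norm_ketbra, h3, mul_one, norm_mul]
    exact mul_le_mul_of_nonneg_right (hfB i) (norm_nonneg _)
  -- The matrix entries of `Ψ' T`, summed in the basis `e` instead of the given basis of `E`.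
  have hΨ' : ∀ v w, HasSum (fun i : ι => ⟪f i, f i⟫ * ⟪b i, T (b i)⟫ * (⟪v, g i⟫ * ⟪g i, w⟫))
      ⟪v, Ψ' T w⟫ := by
    intro v w
    let Q : E'.carrier → E.carrier →L[ℂ] H := fun v => adjoint C ∘L ts'.swap.tL v
    obtain ⟨J, _, κ, hκ⟩ := (hC T hT).2
    have h1 := hasSum_basis_nuclear κ hxy hTxy (Q v) (Q w)
    have h2 := hasSum_basis_nuclear b hxy hTxy (ContinuousLinearMap.id ℂ H) (Q w ∘L adjoint (Q v))
    have h3 : ⟪v, Ψ' T w⟫ = ∑' n, ⟪adjoint (Q w) (y n), adjoint (Q v) (x n)⟫ := by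
      refine (hκ v w).unique (hasSum_of_eq h1 (fun j => ?_) rfl)
      simp [Q, ContinuousLinearMap.adjoint_inner_left, TensorStruct.swap_t]
    refine hasSum_of_eq h2 (fun i => ?_) (h3.trans ?_)
    · have h4 : adjoint (Q v) (b i) = ⟪v, g i⟫ • f i := by
        refine ext_inner_left ℂ fun z => ?_
        rw [ContinuousLinearMap.adjoint_inner_right]
        simp only [Q, ContinuousLinearMap.comp_apply, TensorStruct.tL_apply, TensorStruct.swap_t,
          ContinuousLinearMap.adjoint_inner_left, hg, ts'.inner_t, inner_smul_right]
        ring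
      have h5 : Q w (f i) = (⟪f i, f i⟫ * ⟪g i, w⟫) • b i := hCadj i w
      simp only [ContinuousLinearMap.comp_apply, h4, map_smul, h5, inner_smul_right,
        ContinuousLinearMap.id_apply]
      ring
    · refine tsum_congr fun n => ?_
      simp [ContinuousLinearMap.adjoint_comp,
        ContinuousLinearMap.adjoint_inner_right]
  ext w
  refine ext_inner_left ℂ fun v => ?_
  have h1 := (hsum.hasSum.mapL (ContinuousLinearMap.apply ℂ E'.carrier w)).mapL (innerSL ℂ v)
  refine h1.unique ?_
  have h2 := (hasSum_subtype_iff_of_support_subset (s := {i | f i ≠ 0}) ?_).2 (hΨ' v w)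
  · refine hasSum_of_eq h2 (fun i => ?_) rfl
    rw [hDT]
    simp only [ContinuousLinearMap.apply_apply, innerSL_apply_apply, _root_.smul_apply,
      ketbra_apply, inner_smul_right, Function.comp_apply]
    ring
  · intro i hi hfi
    simp [hfi] at hi

end DiagonalToDegradable

/-! ### A concrete tensor product -/

section Model

variable {ι : Type}

lemma lp_hasSum_sq {G : Type*} [NormedAddCommGroup G] (w : lp (fun _ : ι => G) 2) :
    HasSum (fun i => ‖w i‖ ^ 2) (‖w‖ ^ 2) := by
  have := lp.hasSum_norm (p := 2) (by norm_num) w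
  simpa using this

lemma lp_memℓp {G : Type*} [NormedAddCommGroup G] {w : ι → G}
    (h : Summable (fun i => ‖w i‖ ^ 2)) : Memℓp w 2 :=
  memℓp_gen (by simpa using h)

lemma lpMap_sq_le {φ : ι → H1 →L[ℂ] H2} {c : ℝ} (hc : ∀ i, ‖φ i‖ ≤ c)
    (w : lp (fun _ : ι => H1) 2) (i : ι) : ‖φ i (w i)‖ ^ 2 ≤ c ^ 2 * ‖w i‖ ^ 2 := by
  rw [← mul_pow]
  gcongr
  exact (φ i).le_of_opNorm_le (hc i) _

lemma lpMap_mem {φ : ι → H1 →L[ℂ] H2} {c : ℝ} (hc : ∀ i, ‖φ i‖ ≤ c)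
    (w : lp (fun _ : ι => H1) 2) : Memℓp (fun i => φ i (w i)) 2 :=
  lp_memℓp (Summable.of_nonneg_of_le (fun _ => by positivity) (lpMap_sq_le hc w)
      ((lp_hasSum_sq w).summable.mul_left _))

/-- The direct sum of a uniformly bounded family of operators, as a linear map. -/
def lpMapₗ (φ : ι → H1 →L[ℂ] H2) (c : ℝ) (hc : ∀ i, ‖φ i‖ ≤ c) :
    lp (fun _ : ι => H1) 2 →ₗ[ℂ] lp (fun _ : ι => H2) 2 where
  toFun := fun w => ⟨fun i => φ i (w i), lpMap_mem hc w⟩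
  map_add' := fun v w => by
    refine lp.ext (funext fun i => ?_)
    exact map_add (φ i) (v i) (w i)
  map_smul' := fun a w => by
    refine lp.ext (funext fun i => ?_)
    exact map_smul (φ i) a (w i)

lemma lpMapₗ_norm_le (φ : ι → H1 →L[ℂ] H2) (c : ℝ) (h0 : 0 ≤ c) (hc : ∀ i, ‖φ i‖ ≤ c)
    (w : lp (fun _ : ι => H1) 2) : ‖lpMapₗ φ c hc w‖ ≤ c * ‖w‖ := by
  refine le_of_sq_le_sq ?_ (by positivity)
  rw [mul_pow]
  exact hasSum_le (lpMap_sq_le hc w) (lp_hasSum_sq (lpMapₗ φ c hc w))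
    ((lp_hasSum_sq w).mul_left (c ^ 2))

/-- The direct sum of a uniformly bounded family of operators, acting between `ℓ²`-sums. -/
def lpMap (φ : ι → H1 →L[ℂ] H2) (c : ℝ) (h0 : 0 ≤ c) (hc : ∀ i, ‖φ i‖ ≤ c) :
    lp (fun _ : ι => H1) 2 →L[ℂ] lp (fun _ : ι => H2) 2 :=
  (lpMapₗ φ c hc).mkContinuous c (lpMapₗ_norm_le φ c h0 hc)

@[simp] lemma lpMap_apply (φ : ι → H1 →L[ℂ] H2) (c : ℝ) (h0 : 0 ≤ c) (hc : ∀ i, ‖φ i‖ ≤ c)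
    (w : lp (fun _ : ι => H1) 2) (i : ι) : lpMap φ c h0 hc w i = φ i (w i) := rfl

/-- `H ⊗ K` realized as the `ℓ²`-sum of copies of `K` indexed by a basis of `H`:
`x ⊗ y = (⟪b i, x⟫ y)_i`. -/
def modelTensor (b : HilbertBasis ι ℂ H) (K : Type*) [NormedAddCommGroup K]
    [InnerProductSpace ℂ K] : TensorStruct H K (lp (fun _ : ι => K) 2) where
  t := fun x y => ⟨fun i => ⟪b i, x⟫ • y, lp_memℓp (by
    have h := ((lp_hasSum_sq (b.repr x)).summable.mul_right (‖y‖ ^ 2))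
    refine h.congr fun i => ?_
    rw [norm_smul, mul_pow, b.repr_apply_apply])⟩
  inner_t := fun x x' y y' => by
    refine (lp.hasSum_inner (𝕜 := ℂ) _ _).unique ?_
    refine hasSum_of_eq ((b.hasSum_inner_mul_inner x x').mul_right ⟪y, y'⟫) (fun i => ?_) rfl
    simp only [inner_smul_left, inner_smul_right, inner_conj_symm]
    ring
  dense_t := by
    classical
    rw [eq_top_iff]
    intro w _
    have h := lp.hasSum_single (p := 2) (by norm_num) w
    refine (Submodule.isClosed_topologicalClosure _).mem_of_tendsto h
      (Filter.Eventually.of_forall fun s => ?_)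
    refine Submodule.sum_mem _ fun i _ => Submodule.le_topologicalClosure _ ?_
    refine Submodule.subset_span ⟨b i, w i, ?_⟩
    ext k
    by_cases hk : k = i
    · subst hk
      rw [lp.single_apply_self]
      exact (by rw [basis_inner_self, one_smul] : w k = ⟪b k, b k⟫ • w k)
    · rw [lp.single_apply_ne _ _ _ hk]
      simp [basis_inner_ne b hk]

lemma modelTensor_apply (b : HilbertBasis ι ℂ H) (x : H) (y : K) (i : ι) :
    (modelTensor b K).t x y i = ⟪b i, x⟫ • y := rfl

lemma separableSpace_of_dense_span {V : Type*} [NormedAddCommGroup V] [NormedSpace ℂ V]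
    {s : Set V} (hs : IsSeparable s) (h : (Submodule.span ℂ s).topologicalClosure = ⊤) :
    SeparableSpace V := by
  have h1 := (hs.span (R := ℂ)).closure
  rw [← Submodule.topologicalClosure_coe, h] at h1
  exact isSeparable_univ_iff.1 h1

lemma separable_lp [Countable ι] (K : Type*) [NormedAddCommGroup K]
    [InnerProductSpace ℂ K] [SeparableSpace K] : SeparableSpace (lp (fun _ : ι => K) 2) := by
  classical
  refine separableSpace_of_dense_span (V := lp (fun _ : ι => K) 2)
    (s := ⋃ i : ι, Set.range (lp.single (E := fun _ : ι => K) 2 i)) ?_ ?_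
  · exact IsSeparable.iUnion fun i =>
      isSeparable_range (lp.isometry_single (p := 2) i).continuous
  · rw [eq_top_iff]
    intro w _
    have h := lp.hasSum_single (p := 2) (by norm_num) w
    refine (Submodule.isClosed_topologicalClosure _).mem_of_tendsto h
      (Filter.Eventually.of_forall fun s => ?_)
    refine Submodule.sum_mem _ fun i _ => Submodule.le_topologicalClosure _ ?_
    exact Submodule.subset_span (Set.mem_iUnion.2 ⟨i, w i, rfl⟩)

end Model

/-! ### Kraus operators of a Schur map -/

section SchurKraus

variable {ι : Type} {J : Type*}

/-- Kraus operators of a Schur map are diagonal. -/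
lemma schur_kraus_apply (b : HilbertBasis ι ℂ H) (A : H →L[ℂ] H)
    (SA : (H →L[ℂ] H) → (H →L[ℂ] H))
    (hSA : ∀ T, IsTraceClass T → ∀ i j,
      ⟪b i, SA T (b j)⟫ = ⟪b i, A (b j)⟫ * ⟪b i, T (b j)⟫)
    (C : J → H →L[ℂ] H)
    (hC : ∀ T, IsTraceClass T → HasSum (fun j => C j ∘L T ∘L adjoint (C j)) (SA T))
    (j : J) (i : ι) : C j (b i) = ⟪b i, C j (b i)⟫ • b i := by
  refine basis_inner_smul_self b _ i fun k hk => ?_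
  have h1 := ((((hC _ (isTraceClass_ketbra (b i) (b i))).mapL
    (ContinuousLinearMap.apply ℂ H (b k))).mapL (innerSL ℂ (b k)))).mapL RCLike.reCLM
  rw [schur_ketbra b A SA hSA] at h1
  have h2 : HasSum (fun j => ‖⟪b k, C j (b i)⟫‖ ^ 2) 0 := by
    refine hasSum_of_eq h1 (fun j => ?_) ?_
    · rw [conj_ketbra, ContinuousLinearMap.apply_apply, innerSL_apply_apply, ketbra_apply,
        inner_smul_right, ← inner_conj_symm (C j (b i)), RCLike.conj_mul]
      simp [← Complex.ofReal_pow]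
    · rw [ContinuousLinearMap.apply_apply, innerSL_apply_apply, _root_.smul_apply, ketbra_apply,
        inner_smul_right, inner_smul_right, basis_inner_ne b hk]
      simp
  have h3 := congrFun ((hasSum_zero_iff_of_nonneg (fun i => by positivity)).1 h2) j
  simpa using h3

lemma schur_kraus_adjoint_apply (b : HilbertBasis ι ℂ H) (C : H →L[ℂ] H)
    (hC : ∀ i, C (b i) = ⟪b i, C (b i)⟫ • b i) (i : ι) :
    adjoint C (b i) = (starRingEnd ℂ) ⟪b i, C (b i)⟫ • b i := by
  refine basis_eq_of_inner b fun k => ?_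
  rw [ContinuousLinearMap.adjoint_inner_right, hC k, inner_smul_left, inner_smul_right]
  by_cases hk : k = i
  · rw [hk]
  · rw [basis_inner_ne b hk, mul_zero, mul_zero]

/-- The symbol `A` is the Gram matrix of the diagonals of the Kraus operators. -/
lemma schur_kraus_gram (b : HilbertBasis ι ℂ H) (A : H →L[ℂ] H)
    (SA : (H →L[ℂ] H) → (H →L[ℂ] H))
    (hSA : ∀ T, IsTraceClass T → ∀ i j,
      ⟪b i, SA T (b j)⟫ = ⟪b i, A (b j)⟫ * ⟪b i, T (b j)⟫)
    (C : J → H →L[ℂ] H)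
    (hC : ∀ T, IsTraceClass T → HasSum (fun j => C j ∘L T ∘L adjoint (C j)) (SA T))
    (i k : ι) :
    HasSum (fun j => ⟪b i, C j (b i)⟫ * (starRingEnd ℂ) ⟪b k, C j (b k)⟫) ⟪b i, A (b k)⟫ := by
  have h1 := ((hC _ (isTraceClass_ketbra (b i) (b k))).mapL
    (ContinuousLinearMap.apply ℂ H (b k))).mapL (innerSL ℂ (b i))
  rw [schur_ketbra b A SA hSA] at h1
  refine hasSum_of_eq h1 (fun j => ?_) ?_
  · rw [conj_ketbra, ContinuousLinearMap.apply_apply, innerSL_apply_apply, ketbra_apply,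
      inner_smul_right, inner_conj_symm, mul_comm]
  · simp only [ContinuousLinearMap.apply_apply, innerSL_apply_apply, _root_.smul_apply,
      ketbra_apply, inner_smul_right, basis_inner_self, mul_one]

end SchurKraus

/-! ### Degradable complements force a diagonal symbol -/

section Complement

variable {ι : Type} {J : Type}

/-- A unitary change of the second tensor factor. -/
def TensorStruct.mapRight (ts : TensorStruct K H W) (U : H ≃ₗᵢ[ℂ] H2) : TensorStruct K H2 W where
  t := fun x y => ts.t x (U.symm y)
  inner_t := fun x x' y y' => by rw [ts.inner_t, U.symm.inner_map_map]
  dense_t := by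
    rw [← ts.dense_t]
    congr 2
    ext w
    constructor
    · rintro ⟨x, y, rfl⟩
      exact ⟨x, _, rfl⟩
    · rintro ⟨x, y, rfl⟩
      exact ⟨x, U y, by rw [U.symm_apply_apply]⟩

lemma TensorStruct.mapRight_t (ts : TensorStruct K H W) (U : H ≃ₗᵢ[ℂ] H2) (x : K) (y : H2) :
    (ts.mapRight U).t x y = ts.t x (U.symm y) := rfl

/-- If the operators `C j` are the components of `B : H1 → H2 ⊗ H3` along a basis of `H3`, then
`Σ_j C_j T C_j*` is the partial trace of `B T B*` over `H3`. -/
lemma isPartialTraceRight_of_kraus [Countable J] (ts : TensorStruct H2 H3 W) (B : H1 →L[ℂ] W)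
    (δ : HilbertBasis J ℂ H3) (C : J → H1 →L[ℂ] H2)
    (h : ∀ j x v, ⟪ts.t x (δ j), B v⟫ = ⟪x, C j v⟫) {T : H1 →L[ℂ] H1} {P : H2 →L[ℂ] H2}
    (hP : HasSum (fun j => C j ∘L T ∘L adjoint (C j)) P) :
    IsPartialTraceRight ts (B ∘L T ∘L adjoint B) P := by
  have had : ∀ j x, adjoint B (ts.t x (δ j)) = adjoint (C j) x := fun j x =>
    ext_inner_right ℂ fun v => by
      rw [ContinuousLinearMap.adjoint_inner_left, ContinuousLinearMap.adjoint_inner_left, h]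
  refine ⟨J, inferInstance, δ, fun x y => ?_⟩
  have h1 := (hP.mapL (ContinuousLinearMap.apply ℂ H2 y)).mapL (innerSL ℂ x)
  refine hasSum_of_eq h1 (fun j => ?_) ?_
  · rw [ContinuousLinearMap.apply_apply, innerSL_apply_apply]
    simp only [ContinuousLinearMap.comp_apply]
    rw [had, h]
  · rw [ContinuousLinearMap.apply_apply, innerSL_apply_apply]

lemma exists_ell2_basis (J : Type) : ∃ δ : HilbertBasis J ℂ (lp (fun _ : J => ℂ) 2),
    ∀ j g, ⟪δ j, g⟫ = g j := by
  refine ⟨HilbertBasis.ofRepr (LinearIsometryEquiv.refl ℂ _), fun j g => ?_⟩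
  rw [← HilbertBasis.repr_apply_apply]
  rfl

/-- The operator `x ↦ Σ_i ⟪e_i, x⟫ e_i ⊗ f_i` for a bounded family `f`. -/
lemma exists_diagonal_dilation (b : HilbertBasis ι ℂ H) (f : ι → K) (c : ℝ) (h0 : 0 ≤ c)
    (hf : ∀ i, ‖f i‖ ≤ c) :
    ∃ B : H →L[ℂ] lp (fun _ : ι => K) 2, ∀ x i, B x i = ⟪b i, x⟫ • f i := by
  have hc : ∀ i, ‖(ContinuousLinearMap.id ℂ ℂ).smulRight (f i)‖ ≤ c := fun i => by
    rw [ContinuousLinearMap.norm_smulRight_apply]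
    simpa using hf i
  refine ⟨(lpMap _ c h0 hc) ∘L (b.repr.toContinuousLinearEquiv : H →L[ℂ] _), fun x i => ?_⟩
  have h2 := lpMap_apply _ c h0 hc (b.repr x) i
  refine Eq.trans h2 ?_
  rw [ContinuousLinearMap.smulRight_apply, b.repr_apply_apply]
  rfl

lemma inner_modelTensor_dilation (b : HilbertBasis ι ℂ H) (f : ι → K)
    (B : H →L[ℂ] lp (fun _ : ι => K) 2) (hB : ∀ x i, B x i = ⟪b i, x⟫ • f i) (x v : H) (y : K) :
    HasSum (fun i => ⟪x, b i⟫ * (⟪b i, v⟫ * ⟪y, f i⟫)) ⟪(modelTensor b K).t x y, B v⟫ := by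
  refine hasSum_of_eq (lp.hasSum_inner (𝕜 := ℂ) _ _) (fun i => ?_) rfl
  rw [modelTensor_apply, hB, inner_smul_left, inner_smul_right, inner_conj_symm]

lemma inner_modelTensor_basis_dilation (b : HilbertBasis ι ℂ H) (f : ι → K)
    (B : H →L[ℂ] lp (fun _ : ι => K) 2) (hB : ∀ x i, B x i = ⟪b i, x⟫ • f i) (i : ι) (v : H)
    (y : K) : ⟪(modelTensor b K).t (b i) y, B v⟫ = ⟪y, ketbra (f i) (b i) v⟫ := by
  refine (inner_modelTensor_dilation b f B hB (b i) v y).unique ?_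
  have h1 := hasSum_single (f := fun k => ⟪b i, b k⟫ * (⟪b k, v⟫ * ⟪y, f k⟫)) i (fun k hk => by
    rw [basis_inner_ne b hk.symm, zero_mul])
  refine hasSum_of_eq h1 (fun _ => rfl) ?_
  rw [basis_inner_self, one_mul, ketbra_apply, inner_smul_right]

lemma IsComplementary.of_type {W : Type} [NormedAddCommGroup W] [InnerProductSpace ℂ W]
    [CompleteSpace W] [SeparableSpace W] {Ψ : (H1 →L[ℂ] H1) → (H3 →L[ℂ] H3)}
    {Φ : (H1 →L[ℂ] H1) → (H2 →L[ℂ] H2)} (ts : TensorStruct H2 H3 W) (A : H1 →L[ℂ] W)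
    (h : ∀ T, IsTraceClass T → IsPartialTraceRight ts (A ∘L T ∘L adjoint A) (Φ T) ∧
      IsPartialTraceLeft ts (A ∘L T ∘L adjoint A) (Ψ T)) : IsComplementary Ψ Φ :=
  ⟨⟨W⟩, ts, A, h⟩

lemma Degradable.exists_of_type {K : Type} [NormedAddCommGroup K] [InnerProductSpace ℂ K]
    [CompleteSpace K] [SeparableSpace K] {Φ : (H1 →L[ℂ] H1) → (H2 →L[ℂ] H2)}
    (h : Degradable Φ) {Ψ : (H1 →L[ℂ] H1) → (K →L[ℂ] K)} (hΨ : IsQuantumOperation Ψ)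
    (hc : IsComplementary Ψ Φ) : ∃ Γ : (H2 →L[ℂ] H2) → (K →L[ℂ] K),
      IsQuantumOperation Γ ∧ ∀ T, IsTraceClass T → Γ (Φ T) = Ψ T :=
  h ⟨K⟩ Ψ hΨ hc

lemma degradable_of_type {K : Type} [NormedAddCommGroup K] [InnerProductSpace ℂ K]
    [CompleteSpace K] [SeparableSpace K] {Φ : (H1 →L[ℂ] H1) → (H2 →L[ℂ] H2)}
    (h : ∀ (K : SepHilbert) (Ψ : (H1 →L[ℂ] H1) → (K.carrier →L[ℂ] K.carrier)),
        IsQuantumOperation Ψ → IsComplementary Ψ Φ → Degradable Ψ)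
    {Ψ : (H1 →L[ℂ] H1) → (K →L[ℂ] K)} (hΨ : IsQuantumOperation Ψ)
    (hc : IsComplementary Ψ Φ) : Degradable Ψ :=
  h ⟨K⟩ Ψ hΨ hc

/-- If every complement of `S_A` is degradable, then `A` is diagonal: for the complement
`Ψ(T) = Σ_i |f_i⟩⟨e_i| T |e_i⟩⟨f_i|` the matrix units `|e_i⟩⟨e_k|` with `i ≠ k` are annihilated by
`Ψ`, hence by `S_A`, which factors through `Ψ`. -/
lemma diagonal_of_degradable [Countable ι] (b : HilbertBasis ι ℂ H)
    (A : H →L[ℂ] H) (SA : (H →L[ℂ] H) → (H →L[ℂ] H)) (hSAqo : IsQuantumOperation SA)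
    (hSA : ∀ T, IsTraceClass T → ∀ i j,
      ⟪b i, SA T (b j)⟫ = ⟪b i, A (b j)⟫ * ⟪b i, T (b j)⟫)
    (hdeg : ∀ (K : SepHilbert) (Ψ : (H →L[ℂ] H) → (K.carrier →L[ℂ] K.carrier)),
        IsQuantumOperation Ψ → IsComplementary Ψ SA → Degradable Ψ) :
    ∀ i j, i ≠ j → ⟪b i, A (b j)⟫ = 0 := by
  obtain ⟨J, _, C, S, hS, hC⟩ := hSAqo
  have hCb := schur_kraus_apply b A SA hSA C hC
  have hnorm : ∀ j i, ‖C j (b i)‖ = ‖⟪b i, C j (b i)⟫‖ := fun j i => by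
    conv_lhs => rw [hCb j i]
    rw [norm_smul, b.orthonormal.1 i, mul_one]
  obtain ⟨δ, hδ⟩ := exists_ell2_basis J
  have hmem : ∀ i, Memℓp (fun j => ⟪b i, C j (b i)⟫) 2 := fun i => by
    refine lp_memℓp ((kraus_summable_sq hS (b i)).congr fun j => ?_)
    rw [hnorm]
  obtain ⟨f, hf⟩ : ∃ f : ι → lp (fun _ : J => ℂ) 2, ∀ i j, f i j = ⟪b i, C j (b i)⟫ :=
    ⟨fun i => ⟨_, hmem i⟩, fun i j => rfl⟩
  have hfsq : ∀ i, ∑' j, ‖C j (b i)‖ ^ 2 = ‖f i‖ ^ 2 := fun i => by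
    rw [← (lp_hasSum_sq (f i)).tsum_eq]
    exact tsum_congr fun j => by rw [hnorm, hf]
  have hfle : ∀ i, ‖f i‖ ≤ Real.sqrt ‖S‖ := fun i => by
    refine Real.le_sqrt_of_sq_le ?_
    rw [← hfsq]
    simpa [b.orthonormal.1 i] using kraus_tsum_sq_le hS (b i)
  obtain ⟨B, hB⟩ := exists_diagonal_dilation b f _ (Real.sqrt_nonneg _) hfle
  have hSb : ∀ i, S (b i) = ((‖f i‖ ^ 2 : ℝ) : ℂ) • b i := fun i => by
    have h1 := (kraus_summable_sq hS (b i)).hasSum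
    rw [hfsq] at h1
    have h2 := (h1.mapL Complex.ofRealCLM).smul_const (b i)
    refine (hS (b i)).unique (hasSum_of_eq h2 (fun j => ?_) rfl)
    conv_lhs => rw [hCb j i, map_smul, schur_kraus_adjoint_apply b (C j) (hCb j), smul_smul,
      RCLike.mul_conj, ← hnorm]
    simp
  -- the Kraus operators `|f_i⟩⟨e_i|` of the complement have the same sum `S`
  have hDS : ∀ x, HasSum (fun i => adjoint (ketbra (f i) (b i)) (ketbra (f i) (b i) x)) (S x) := by
    intro x
    refine hasSum_of_eq ((b.hasSum_repr x).mapL S) (fun i => ?_) rfl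
    rw [adjoint_ketbra, ketbra_apply, ketbra_apply, map_smul, hSb, b.repr_apply_apply,
      inner_smul_right, mul_smul, inner_self_eq_norm_sq_to_K]
    simp
  obtain ⟨Ψ, hΨ⟩ : ∃ Ψ : (H →L[ℂ] H) →
      (lp (fun _ : J => ℂ) 2 →L[ℂ] lp (fun _ : J => ℂ) 2), ∀ T, IsTraceClass T →
      HasSum (fun i => ketbra (f i) (b i) ∘L T ∘L adjoint (ketbra (f i) (b i))) (Ψ T) :=
    ⟨fun T => ∑' i, ketbra (f i) (b i) ∘L T ∘L adjoint (ketbra (f i) (b i)),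
      fun T hT => (kraus_summable_norm hDS hT).of_norm.hasSum⟩
  have hΨq : IsQuantumOperation Ψ := ⟨ι, inferInstance, _, S, hDS, hΨ⟩
  have hBδ : ∀ j x v, ⟪(modelTensor b _).t x (δ j), B v⟫ = ⟪x, C j v⟫ := by
    intro j x v
    refine (inner_modelTensor_dilation b f B hB x v (δ j)).unique
      (hasSum_of_eq (b.hasSum_inner_mul_inner x (C j v)) (fun i => ?_) rfl)
    rw [← ContinuousLinearMap.adjoint_inner_left, schur_kraus_adjoint_apply b (C j) (hCb j),
      inner_smul_left, Complex.conj_conj, hδ, hf, mul_comm ⟪b i, v⟫]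
  have hBb : ∀ i y v, ⟪(modelTensor b _).swap.t y (b i), B v⟫ = ⟪y, ketbra (f i) (b i) v⟫ :=
    fun i y v => inner_modelTensor_basis_dilation b f B hB i v y
  have : SeparableSpace (lp (fun _ : J => ℂ) 2) := separable_lp ℂ
  have : SeparableSpace (lp (fun _ : ι => ℂ) 2) := separable_lp ℂ
  have : SeparableSpace (lp (fun _ : ι => lp (fun _ : J => ℂ) 2) 2) := separable_lp _
  have hcompl : IsComplementary Ψ SA :=
    IsComplementary.of_type (modelTensor b _) B fun T hT =>
      ⟨isPartialTraceRight_of_kraus _ B δ C hBδ (hC T hT),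
        isPartialTraceRight_of_kraus (modelTensor b _).swap B b _ hBb (hΨ T hT)⟩
  -- a copy of `S_A` on `ℓ²(ι)`, complementary to `Ψ`
  obtain ⟨ε, hε⟩ := exists_ell2_basis ι
  have hεsymm : ∀ i, b.repr.symm (ε i) = b i := fun i => basis_eq_of_inner b fun k => by
    rw [← b.repr_apply_apply, b.repr.apply_symm_apply, ← hε]
    by_cases hk : k = i
    · rw [hk, basis_inner_self, basis_inner_self]
    · rw [basis_inner_ne ε hk, basis_inner_ne b hk]
  obtain ⟨V, hV⟩ : ∃ V : H →L[ℂ] lp (fun _ : ι => ℂ) 2, ∀ x, V x = b.repr x :=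
    ⟨(b.repr.toContinuousLinearEquiv : H →L[ℂ] _), fun x => rfl⟩
  have hVV : ∀ x, adjoint V (V x) = x := fun x => ext_inner_left ℂ fun y => by
    rw [ContinuousLinearMap.adjoint_inner_right, hV, hV, b.repr.inner_map_map]
  have hVS : ∀ x, HasSum (fun j => adjoint (V ∘L C j) ((V ∘L C j) x)) (S x) := fun x => by
    refine hasSum_of_eq (hS x) (fun j => ?_) rfl
    rw [ContinuousLinearMap.adjoint_comp, ContinuousLinearMap.comp_apply,
      ContinuousLinearMap.comp_apply, hVV]
  have hVC : ∀ T, IsTraceClass T → HasSum (fun j => (V ∘L C j) ∘L T ∘L adjoint (V ∘L C j))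
      (V ∘L SA T ∘L adjoint V) := fun T hT => by
    have h1 := ((hC T hT).mapL (ContinuousLinearMap.compL ℂ _ _ _ V)).mapL
      ((ContinuousLinearMap.compL ℂ _ _ _).flip (adjoint V))
    refine hasSum_of_eq h1 (fun j => ?_) rfl
    rw [ContinuousLinearMap.adjoint_comp]
    rfl
  have hcompl' : IsComplementary (fun T => V ∘L SA T ∘L adjoint V) Ψ :=
    IsComplementary.of_type ((modelTensor b _).swap.mapRight b.repr) B fun T hT =>
      ⟨isPartialTraceRight_of_kraus ((modelTensor b _).swap.mapRight b.repr) B ε _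
          (fun i y v => by rw [TensorStruct.mapRight_t, hεsymm, hBb]) (hΨ T hT),
        isPartialTraceRight_of_kraus ((modelTensor b _).swap.mapRight b.repr).swap B δ _
          (fun j x v => by
            rw [TensorStruct.swap_t, TensorStruct.mapRight_t, TensorStruct.swap_t, hBδ,
              ContinuousLinearMap.comp_apply, hV, ← b.repr.inner_map_map,
              b.repr.apply_symm_apply])
          (hVC T hT)⟩
  obtain ⟨Γ, ⟨JΓ, _, CΓ, SΓ, hSΓ, hCΓ⟩, hΓΨ⟩ := (degradable_of_type hdeg hΨq hcompl).exists_of_type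
    ⟨J, inferInstance, _, S, hVS, hVC⟩ hcompl'
  intro i k hik
  have hT := isTraceClass_ketbra (b i) (b k)
  have hΨ0 : Ψ (ketbra (b i) (b k)) = 0 := by
    refine (hΨ _ hT).unique (hasSum_of_eq hasSum_zero (fun l => ?_) rfl)
    rw [conj_ketbra, ketbra_apply, ketbra_apply]
    by_cases hl : l = i
    · rw [basis_inner_ne b (hl.trans_ne hik), zero_smul]
      ext v
      simp
    · rw [basis_inner_ne b hl, zero_smul]
      ext v
      simp
  have hΓ0 : Γ 0 = 0 := by
    have h0 : IsTraceClass (0 : lp (fun _ : J => ℂ) 2 →L[ℂ] lp (fun _ : J => ℂ) 2) := by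
      exact ⟨0, 0, by simp, fun v => by simp⟩
    exact (hCΓ 0 h0).unique (hasSum_of_eq hasSum_zero (fun l => by simp) rfl)
  have h1 := hΓΨ _ hT
  rw [hΨ0, hΓ0, schur_ketbra b A SA hSA] at h1
  have h2 := congrArg (fun P => ⟪b i, adjoint V (P (V (b k)))⟫) h1
  simp only [ContinuousLinearMap.comp_apply, hVV] at h2
  simp only [_root_.smul_apply, ketbra_apply, inner_smul_right, basis_inner_self, mul_one,
    _root_.zero_apply, map_zero, inner_zero_right] at h2
  exact h2.symm

end Complement

/-! ### Traces and states -/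

section Trace

variable {J : Type*}

lemma isPositive_apply_eq_zero {T : H →L[ℂ] H} (hT : T.IsPositive) {v : H} (h : ⟪v, T v⟫ = 0) :
    T v = 0 := by
  obtain ⟨s, rfl⟩ := CStarAlgebra.nonneg_iff_eq_star_mul_self.1
    ((ContinuousLinearMap.nonneg_iff_isPositive T).2 hT)
  have h1 : ⟪s v, s v⟫ = 0 := by
    rw [← h, ContinuousLinearMap.star_eq_adjoint]
    exact (ContinuousLinearMap.adjoint_inner_right s v (s v)).symm
  rw [inner_self_eq_zero] at h1
  rw [mul_apply_eq_comp, h1, map_zero]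

lemma isPositive_ketbra (x : H) : (ketbra x x).IsPositive := by
  rw [ContinuousLinearMap.isPositive_iff_complex]
  intro v
  rw [ketbra_apply, inner_smul_left, inner_conj_symm, ← inner_conj_symm, mul_comm,
    RCLike.mul_conj]
  constructor
  · simp [← Complex.ofReal_pow]
  · rw [← RCLike.ofReal_pow, RCLike.ofReal_re]
    positivity

lemma hasSum_trace_nuclear {T : H →L[ℂ] H} {x y : ℕ → H}
    (hxy : Summable (fun n => ‖x n‖ * ‖y n‖))
    (hT : ∀ v, HasSum (fun n => ⟪y n, v⟫ • x n) (T v)) :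
    trace T = ∑' n, ⟪y n, x n⟫ := by
  obtain ⟨b, hb⟩ := (exists_hilbertBasis ℂ H).choose_spec
  have h := hasSum_basis_nuclear b hxy hT (ContinuousLinearMap.id ℂ H)
    (ContinuousLinearMap.id ℂ H)
  rw [ContinuousLinearMap.adjoint_id, hb] at h
  exact h.tsum_eq

/-- The trace of a trace-class operator may be computed in any basis. -/
lemma hasSum_trace (b : HilbertBasis J ℂ H) {T : H →L[ℂ] H} (hT : IsTraceClass T) :
    HasSum (fun j => ⟪b j, T (b j)⟫) (trace T) := by
  obtain ⟨x, y, hxy, hT⟩ := hT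
  have h := hasSum_basis_nuclear b hxy hT (ContinuousLinearMap.id ℂ H)
    (ContinuousLinearMap.id ℂ H)
  rw [ContinuousLinearMap.adjoint_id] at h
  rw [hasSum_trace_nuclear hxy hT]
  exact h

lemma trace_ketbra (x y : H) : trace (ketbra x y) = ⟪y, x⟫ := by
  obtain ⟨w, b, -⟩ := exists_hilbertBasis ℂ H
  refine (hasSum_trace b (isTraceClass_ketbra x y)).unique
    (hasSum_of_eq (b.hasSum_inner_mul_inner y x) (fun j => ?_) rfl)
  rw [ketbra_apply, inner_smul_right]

lemma isState_ketbra {x : H} (hx : ‖x‖ = 1) : IsState (ketbra x x) :=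
  ⟨isTraceClass_ketbra x x, isPositive_ketbra x, by
    rw [trace_ketbra, inner_self_eq_norm_sq_to_K, hx]; simp⟩

lemma IsTraceClass.smul {T : H →L[ℂ] H} (hT : IsTraceClass T) (c : ℂ) : IsTraceClass (c • T) := by
  obtain ⟨x, y, hxy, hT⟩ := hT
  refine ⟨fun n => c • x n, y, ?_, fun v => ?_⟩
  · refine (hxy.mul_left ‖c‖).congr fun n => ?_
    rw [norm_smul, mul_assoc]
  · refine hasSum_of_eq ((hT v).const_smul c) (fun n => ?_) rfl
    rw [smul_comm]

lemma trace_smul (c : ℂ) (T : H →L[ℂ] H) : trace (c • T) = c * trace T := by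
  unfold trace
  rw [← tsum_mul_left]
  exact tsum_congr fun i => by rw [_root_.smul_apply, inner_smul_right]

lemma trace_nonneg {T : H →L[ℂ] H} (hT : IsTraceClass T) (hp : T.IsPositive) : 0 ≤ trace T := by
  obtain ⟨w, b, -⟩ := exists_hilbertBasis ℂ H
  exact (hasSum_trace b hT).nonneg fun j => hp.inner_nonneg_right _

lemma eq_zero_of_trace_eq_zero {T : H →L[ℂ] H} (hT : IsTraceClass T) (hp : T.IsPositive)
    (h : trace T = 0) : T = 0 := by
  obtain ⟨w, b, -⟩ := exists_hilbertBasis ℂ H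
  have h1 := hasSum_trace b hT
  rw [h] at h1
  have h2 := (hasSum_zero_iff_of_nonneg fun j => hp.inner_nonneg_right _).1 h1
  refine basis_clm_ext b fun j => ?_
  exact isPositive_apply_eq_zero hp (congrFun h2 j)

/-- A positive trace-class operator is a nonnegative multiple of a state; the unit vector `u`
provides a state for the zero operator. -/
lemma exists_state_smul {T : H →L[ℂ] H} (hT : IsTraceClass T) (hp : T.IsPositive) {u : H}
    (hu : ‖u‖ = 1) : ∃ (r : ℝ) (ρ : H →L[ℂ] H), 0 ≤ r ∧ IsState ρ ∧ trace T = r ∧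
      T = (r : ℂ) • ρ := by
  have h0 := trace_nonneg hT hp
  obtain ⟨r, hr⟩ : ∃ r : ℝ, trace T = r := ⟨(trace T).re, by
    rw [Complex.nonneg_iff] at h0
    exact Complex.ext rfl h0.2.symm⟩
  have hr0 : 0 ≤ r := by rw [hr] at h0; exact_mod_cast h0
  by_cases hrz : r = 0
  · refine ⟨0, ketbra u u, le_rfl, isState_ketbra hu, by rw [hr, hrz], ?_⟩
    rw [eq_zero_of_trace_eq_zero hT hp (by rw [hr, hrz]; simp)]
    simp
  · have hrc : (r : ℂ) ≠ 0 := by exact_mod_cast hrz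
    refine ⟨r, (r : ℂ)⁻¹ • T, hr0, ⟨hT.smul _, hp.smul_of_nonneg ?_, ?_⟩, hr, ?_⟩
    · rw [← Complex.ofReal_inv]
      exact_mod_cast inv_nonneg.2 hr0
    · rw [trace_smul, hr, inv_mul_cancel₀ hrc]
    · rw [smul_smul, mul_inv_cancel₀ hrc, one_smul]

lemma IsTraceClass.conj_nuclear {T : H →L[ℂ] H} {x y : ℕ → H}
    (hT : ∀ v, HasSum (fun n => ⟪y n, v⟫ • x n) (T v)) (C : H →L[ℂ] K) (v : K) :
    HasSum (fun n => ⟪C (y n), v⟫ • C (x n)) ((C ∘L T ∘L adjoint C) v) := by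
  refine hasSum_of_eq ((hT (adjoint C v)).mapL C) (fun n => ?_) rfl
  rw [map_smul, ContinuousLinearMap.adjoint_inner_right]

/-- Compressing a trace-class operator by the members of a Kraus family gives trace-class
operators with summable traces. -/
lemma kraus_trace_summable {C : J → H →L[ℂ] K} {S : H →L[ℂ] H}
    (hS : ∀ x, HasSum (fun j => adjoint (C j) (C j x)) (S x)) {T : H →L[ℂ] H}
    (hT : IsTraceClass T) : (∀ j, IsTraceClass (C j ∘L T ∘L adjoint (C j))) ∧
      Summable (fun j => ‖trace (C j ∘L T ∘L adjoint (C j))‖) := by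
  obtain ⟨x, y, hxy, hT⟩ := hT
  have h := (summable_prod_of_nonneg (fun q => by simp; positivity)).1 (kraus_summable_prod hS hxy)
  refine ⟨fun j => ⟨_, _, h.1 j, IsTraceClass.conj_nuclear hT (C j)⟩, ?_⟩
  refine Summable.of_nonneg_of_le (fun j => norm_nonneg _) (fun j => ?_) h.2
  rw [hasSum_trace_nuclear (h.1 j) (IsTraceClass.conj_nuclear hT (C j))]
  refine tsum_of_norm_bounded (h.1 j).hasSum fun n => ?_
  rw [mul_comm]
  exact norm_inner_le_norm _ _

end Trace

/-! ### Slices of a tensor product -/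

section Slices

variable {ι : Type*}

lemma TensorStruct.adjoint_tL (ts : TensorStruct K H W) (x x' : K) (y : H) :
    adjoint (ts.tL x) (ts.t x' y) = ⟪x, x'⟫ • y :=
  ext_inner_left ℂ fun v => by
    rw [ContinuousLinearMap.adjoint_inner_right, ts.tL_apply, ts.inner_t, inner_smul_right]

/-- The slices `x ↦ e_i ⊗ x` along an orthonormal basis resolve the identity of the tensor
product. -/
lemma TensorStruct.hasSum_slices (ts : TensorStruct H K W) (b : HilbertBasis ι ℂ H) (w : W) :
    HasSum (fun i => ts.tL (b i) (adjoint (ts.tL (b i)) w)) w := by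
  obtain ⟨V, hV⟩ : ∃ V : ι → K →ₗᵢ[ℂ] W, ∀ i x, V i x = ts.t (b i) x :=
    ⟨fun i => ⟨(ts.tL (b i)).toLinearMap, fun x => by
      have := ts.norm_t (b i) x
      rw [b.orthonormal.1 i, one_mul] at this
      exact this⟩, fun i x => rfl⟩
  have hO : OrthogonalFamily ℂ (fun _ : ι => K) V := fun i j hij v w => by
    rw [hV, hV, ts.inner_t, basis_inner_ne b hij, zero_mul]
  have hsum : IsHilbertSum ℂ (fun _ : ι => K) V := by
    refine IsHilbertSum.mk hO (top_le_iff.2 ?_)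
    rw [Submodule.topologicalClosure_eq_top_iff, eq_bot_iff]
    intro w hw
    rw [Submodule.mem_bot]
    refine ts.eq_of_inner_basis b fun j y => ?_
    rw [inner_zero_right]
    exact hw _ (Submodule.mem_iSup_of_mem j ⟨y, hV j y⟩)
  obtain ⟨u, hu⟩ : ∃ u : lp (fun _ : ι => K) 2, HasSum (fun i => V i (u i)) w :=
    ⟨hsum.linearIsometryEquiv w, by
      simpa using hsum.hasSum_linearIsometryEquiv_symm (hsum.linearIsometryEquiv w)⟩
  refine hasSum_of_eq hu (fun i => ?_) rfl
  rw [hV, ts.tL_apply]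
  congr 1
  have h1 := hu.mapL (adjoint (ts.tL (b i)))
  refine h1.unique ?_
  have h2 := hasSum_single (f := fun k => adjoint (ts.tL (b i)) (V k (u k))) i (fun k hk => by
    rw [hV, ts.adjoint_tL, basis_inner_ne b hk.symm, zero_smul])
  refine hasSum_of_eq h2 (fun _ => rfl) ?_
  rw [hV, ts.adjoint_tL, basis_inner_self, one_smul]

end Slices

/-! ### Diagonal Schur maps are strongly entanglement breaking -/

section Separable

variable {ι : Type}

lemma CDSeparable.of_countable [Countable ι] [Nonempty ι] (ts : TensorStruct K H W)
    {ρ : W →L[ℂ] W} (p : ι → ℝ) (ρ1 : ι → K →L[ℂ] K) (ρ2 : ι → H →L[ℂ] H) (τ : ι → W →L[ℂ] W)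
    (hp : ∀ i, 0 ≤ p i) (hps : Summable p) (h1 : ∀ i, IsState (ρ1 i)) (h2 : ∀ i, IsState (ρ2 i))
    (hτ : ∀ i, IsProductOp ts (ρ1 i) (ρ2 i) (τ i))
    (hρ : HasSum (fun i => (p i : ℂ) • τ i) ρ) : CDSeparable ts ρ := by
  obtain ⟨f, hf⟩ := exists_injective_nat ι
  obtain ⟨g, hg⟩ : ∃ g : ℕ → ι, ∀ i, g (f i) = i :=
    ⟨Function.invFun f, Function.leftInverse_invFun hf⟩
  have hp0 : ∀ n ∉ Set.range f, Function.extend f p 0 n = 0 := fun n hn => by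
    rw [Function.extend_apply' _ _ _ (by simpa using hn)]; rfl
  refine ⟨Function.extend f p 0, fun n => ρ1 (g n), fun n => ρ2 (g n), fun n => τ (g n),
    fun n => ?_, ?_, fun n => h1 _, fun n => h2 _, fun n => hτ _, ?_⟩
  · by_cases hn : n ∈ Set.range f
    · obtain ⟨i, rfl⟩ := hn
      rw [hf.extend_apply]
      exact hp i
    · rw [hp0 n hn]
  · refine (hf.summable_iff hp0).1 (hps.congr fun i => ?_)
    rw [Function.comp_apply, hf.extend_apply]
  · refine (hf.hasSum_iff fun n hn => by rw [hp0 n hn]; simp).1 (hasSum_of_eq hρ (fun i => ?_) rfl)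
    rw [Function.comp_apply, hf.extend_apply]
    exact congrArg (fun l => (p i : ℂ) • τ l) (hg i)

/-- `id ⊗ S_A` multiplies the `(i, k)` block of an operator by `⟪e_i, A e_k⟫`. -/
lemma inner_idTensor_schur (b : HilbertBasis ι ℂ H) (A : H →L[ℂ] H)
    (SA : (H →L[ℂ] H) → (H →L[ℂ] H))
    (hSA : ∀ T, IsTraceClass T → ∀ i j,
      ⟪b i, SA T (b j)⟫ = ⟪b i, A (b j)⟫ * ⟪b i, T (b j)⟫)
    (ts : TensorStruct K H W) (ts' : TensorStruct K H W') {ρ : W →L[ℂ] W} {σ : W' →L[ℂ] W'}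
    (hσ : IsIdTensorApply ts ts' SA ρ σ) (x x' : K) (i k : ι) :
    ⟪ts'.t x (b i), σ (ts'.t x' (b k))⟫ =
      ⟪b i, A (b k)⟫ * ⟪ts.t x (b i), ρ (ts.t x' (b k))⟫ := by
  obtain ⟨J, _, C, S, hS, hC, L, hL, hsum⟩ := hσ
  have hCb := schur_kraus_apply b A SA hSA C hC
  have hLad : ∀ j x i, adjoint (L j) (ts'.t x (b i)) =
      (starRingEnd ℂ) ⟪b i, C j (b i)⟫ • ts.t x (b i) := by
    intro j x i
    refine ts.eq_of_inner fun z y => ?_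
    rw [ContinuousLinearMap.adjoint_inner_right, hL, ts'.inner_t, inner_smul_right, ts.inner_t,
      ← ContinuousLinearMap.adjoint_inner_right, schur_kraus_adjoint_apply b (C j) (hCb j),
      inner_smul_right]
    ring
  have h1 := (hsum.mapL (ContinuousLinearMap.apply ℂ W' (ts'.t x' (b k)))).mapL
    (innerSL ℂ (ts'.t x (b i)))
  refine h1.unique (hasSum_of_eq ((schur_kraus_gram b A SA hSA C hC i k).mul_right
    ⟪ts.t x (b i), ρ (ts.t x' (b k))⟫) (fun j => ?_) rfl)
  rw [ContinuousLinearMap.apply_apply, innerSL_apply_apply, ContinuousLinearMap.comp_apply,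
    ContinuousLinearMap.comp_apply, ← ContinuousLinearMap.adjoint_inner_left, hLad, hLad,
    map_smul, inner_smul_left, inner_smul_right, Complex.conj_conj, mul_assoc]

/-- A diagonal Schur map is strongly entanglement breaking: the output of `ρ` is the sum of
`⟪e_i, A e_i⟫ R_i ⊗ |e_i⟩⟨e_i|`, where `R_i` is the `i`-th diagonal block of `ρ`. -/
lemma seb_of_diagonal [Countable ι] (b : HilbertBasis ι ℂ H)
    (A : H →L[ℂ] H) (hA : A.IsPositive) (SA : (H →L[ℂ] H) → (H →L[ℂ] H))
    (hSA : ∀ T, IsTraceClass T → ∀ i j,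
      ⟪b i, SA T (b j)⟫ = ⟪b i, A (b j)⟫ * ⟪b i, T (b j)⟫)
    (hdiag : ∀ i j, i ≠ j → ⟪b i, A (b j)⟫ = 0) : IsSEB SA := by
  intro K W W' ts ts' ρ σ hρ hσ
  have hblock := inner_idTensor_schur b A SA hSA ts ts' hσ
  obtain ⟨hρt, hρp, hρ1⟩ := hρ
  -- both factors are nonzero because `ρ` has trace one
  obtain ⟨x, y, hxy⟩ : ∃ x y, ts.t x y ≠ 0 := by
    by_contra! hcon
    have hW : ∀ w : W.carrier, w = 0 := fun w => ts.eq_of_inner fun x y => by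
      rw [hcon, inner_zero_left, inner_zero_left]
    have : ρ = (0 : ℂ) • ρ := by
      ext w
      rw [hW (ρ w), hW (((0 : ℂ) • ρ) w)]
    rw [this, trace_smul, zero_mul] at hρ1
    exact zero_ne_one hρ1
  have hx : x ≠ 0 := by
    rintro rfl
    refine hxy (norm_eq_zero.1 ?_)
    rw [ts.norm_t, norm_zero, zero_mul]
  have : Nonempty ι := by
    by_contra hι
    rw [not_nonempty_iff] at hι
    have hy : y = 0 := basis_eq_of_inner b fun j => hι.elim j
    refine hxy (norm_eq_zero.1 ?_)
    rw [ts.norm_t, hy, norm_zero, mul_zero]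
  obtain ⟨u, hu⟩ : ∃ u : K.carrier, ‖u‖ = 1 := ⟨((‖x‖ : ℂ)⁻¹) • x, by
    rw [norm_smul, norm_inv, Complex.norm_real, norm_norm,
      inv_mul_cancel₀ (norm_ne_zero_iff.2 hx)]⟩
  obtain ⟨M, hM⟩ : ∃ M : ι → K.carrier →L[ℂ] W.carrier, ∀ i, M i = ts.swap.tL (b i) :=
    ⟨_, fun _ => rfl⟩
  obtain ⟨M', hM'⟩ : ∃ M' : ι → K.carrier →L[ℂ] W'.carrier, ∀ i, M' i = ts'.swap.tL (b i) :=
    ⟨_, fun _ => rfl⟩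
  have hMS : ∀ w, HasSum (fun i => adjoint (adjoint (M i)) (adjoint (M i) w))
      ((ContinuousLinearMap.id ℂ W.carrier) w) := fun w => by
    refine hasSum_of_eq (ts.swap.hasSum_slices b w) (fun i => ?_) rfl
    rw [ContinuousLinearMap.adjoint_adjoint, hM]
  obtain ⟨hRt, hRs⟩ := kraus_trace_summable hMS hρt
  have hRn := kraus_summable_norm hMS hρt
  have hRp : ∀ i, (adjoint (M i) ∘L ρ ∘L adjoint (adjoint (M i))).IsPositive := fun i => by
    rw [ContinuousLinearMap.adjoint_adjoint]
    exact hρp.adjoint_conj _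
  choose r ρ1 hr hst htr hRr using fun i => exists_state_smul (hRt i) (hRp i) hu
  have ha : ∀ i, ∃ a : ℝ, 0 ≤ a ∧ a ≤ ‖A‖ ∧ ⟪b i, A (b i)⟫ = a := fun i => by
    have h0 := hA.inner_nonneg_right (b i)
    rw [Complex.nonneg_iff] at h0
    refine ⟨(⟪b i, A (b i)⟫ : ℂ).re, h0.1, ?_, Complex.ext rfl h0.2.symm⟩
    calc (⟪b i, A (b i)⟫ : ℂ).re ≤ ‖b i‖ * ‖A (b i)‖ := re_inner_le_norm (𝕜 := ℂ) _ _
      _ ≤ ‖b i‖ * (‖A‖ * ‖b i‖) := by gcongr; exact A.le_opNorm _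
      _ = ‖A‖ := by rw [b.orthonormal.1 i]; ring
  choose a ha0 haA hab using ha
  obtain ⟨τ, hτ⟩ : ∃ τ : ι → W'.carrier →L[ℂ] W'.carrier,
      ∀ i, τ i = M' i ∘L ρ1 i ∘L adjoint (M' i) := ⟨_, fun _ => rfl⟩
  have hprod : ∀ i, IsProductOp ts' (ρ1 i) (ketbra (b i) (b i)) (τ i) := fun i x x' y y' => by
    rw [hτ, ContinuousLinearMap.comp_apply, ContinuousLinearMap.comp_apply,
      ← ContinuousLinearMap.adjoint_inner_left, hM', ← ts'.swap_t x y, ← ts'.swap_t x' y',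
      ts'.swap.adjoint_tL, ts'.swap.adjoint_tL, map_smul, inner_smul_left, inner_smul_right,
      ketbra_apply, inner_smul_right, inner_conj_symm]
    ring
  have hpτ : ∀ i, ‖((a i * r i : ℝ) : ℂ) • τ i‖ ≤
      ‖A‖ * ‖adjoint (M i) ∘L ρ ∘L adjoint (adjoint (M i))‖ := fun i => by
    have hM1 : ‖M' i‖ ≤ 1 := by
      rw [hM', ← b.orthonormal.1 i]
      exact ts'.swap.norm_tL_le (b i)
    have h1 : ((a i * r i : ℝ) : ℂ) • τ i = (a i : ℂ) •
        (M' i ∘L (adjoint (M i) ∘L ρ ∘L adjoint (adjoint (M i))) ∘L adjoint (M' i)) := by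
      rw [hRr i, hτ, Complex.ofReal_mul, mul_smul, ContinuousLinearMap.smul_comp,
        ContinuousLinearMap.comp_smul]
    rw [h1, norm_smul, Complex.norm_real, Real.norm_of_nonneg (ha0 i)]
    refine mul_le_mul (haA i) ?_ (norm_nonneg _) (norm_nonneg _)
    generalize adjoint (M i) ∘L ρ ∘L adjoint (adjoint (M i)) = R
    calc _ ≤ ‖M' i‖ * (‖R‖ * ‖adjoint (M' i)‖) :=
        (ContinuousLinearMap.opNorm_comp_le _ _).trans
          (mul_le_mul_of_nonneg_left (ContinuousLinearMap.opNorm_comp_le _ _) (norm_nonneg _))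
      _ ≤ 1 * (‖R‖ * 1) := by
        rw [LinearIsometryEquiv.norm_map]
        gcongr
      _ = ‖R‖ := by ring
  have hsum : Summable (fun i => ((a i * r i : ℝ) : ℂ) • τ i) :=
    Summable.of_norm_bounded (hRn.mul_left ‖A‖) hpτ
  refine CDSeparable.of_countable ts' (fun i => a i * r i) ρ1 (fun i => ketbra (b i) (b i)) τ
    (fun i => mul_nonneg (ha0 i) (hr i)) ?_ hst (fun i => isState_ketbra (b.orthonormal.1 i))
    hprod ?_
  · refine Summable.of_nonneg_of_le (fun i => mul_nonneg (ha0 i) (hr i)) (fun i => ?_)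
      (hRs.mul_left ‖A‖)
    rw [htr, Complex.norm_real, Real.norm_of_nonneg (hr i)]
    exact mul_le_mul_of_nonneg_right (haA i) (hr i)
  · refine hasSum_of_eq hsum.hasSum (fun _ => rfl) ?_
    refine ts'.clm_ext_basis b fun x i x' k => ?_
    have h1 := (hsum.hasSum.mapL (ContinuousLinearMap.apply ℂ _ (ts'.t x' (b k)))).mapL
      (innerSL ℂ (ts'.t x (b i)))
    refine HasSum.unique ?_ h1
    have hterm : ∀ l, innerSL ℂ (ts'.t x (b i)) (ContinuousLinearMap.apply ℂ _ (ts'.t x' (b k))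
        (((a l * r l : ℝ) : ℂ) • τ l)) =
        a l * r l * ⟪x, ρ1 l x'⟫ * (⟪b i, b l⟫ * ⟪b l, b k⟫) := fun l => by
      rw [ContinuousLinearMap.apply_apply, innerSL_apply_apply, _root_.smul_apply,
        inner_smul_right, hprod l, ketbra_apply, inner_smul_right, Complex.ofReal_mul]
      ring
    have h2 := hasSum_single (f := fun l => innerSL ℂ (ts'.t x (b i))
      (ContinuousLinearMap.apply ℂ _ (ts'.t x' (b k)) (((a l * r l : ℝ) : ℂ) • τ l))) i
      (fun l hl => by rw [hterm, basis_inner_ne b hl.symm, zero_mul, mul_zero])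
    refine hasSum_of_eq h2 (fun _ => rfl) ?_
    rw [hterm, hblock, basis_inner_self, one_mul]
    by_cases hik : i = k
    · subst hik
      have h3 := congrArg (fun P => ⟪x, P x'⟫) (hRr i)
      simp only [ContinuousLinearMap.comp_apply, ContinuousLinearMap.adjoint_adjoint,
        ContinuousLinearMap.adjoint_inner_right, _root_.smul_apply, inner_smul_right] at h3
      rw [hM] at h3
      rw [basis_inner_self, mul_one, hab, mul_assoc, ← h3]
      rfl
    · rw [hdiag i k hik, basis_inner_ne b hik, zero_mul, mul_zero]

end Separable

/-! ### Strongly entanglement breaking Schur maps are diagonal -/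

section EntanglementBreaking

variable {ι : Type}

/-- A product vector in the kernel of the quadratic form of a countably separable operator
forces off-diagonal entries to vanish, since this holds for each product term. -/
lemma CDSeparable.inner_eq_zero {ts : TensorStruct K H W} {σ : W →L[ℂ] W} (hσ : CDSeparable ts σ)
    {x : K} {e : H} (h0 : ⟪ts.t x e, σ (ts.t x e)⟫ = 0) (x' : K) (y : H) :
    ⟪ts.t x y, σ (ts.t x' e)⟫ = 0 := by
  obtain ⟨p, ρ1, ρ2, τ, hp, -, h1, h2, hτ, hsum⟩ := hσ
  have hval : ∀ u v w z, HasSum (fun n => (p n : ℂ) * (⟪u, ρ1 n w⟫ * ⟪v, ρ2 n z⟫))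
      ⟪ts.t u v, σ (ts.t w z)⟫ := fun u v w z => by
    refine hasSum_of_eq ((hsum.mapL (ContinuousLinearMap.apply ℂ W (ts.t w z))).mapL
      (innerSL ℂ (ts.t u v))) (fun n => ?_) rfl
    rw [ContinuousLinearMap.apply_apply, innerSL_apply_apply, _root_.smul_apply,
      inner_smul_right, hτ n]
  have hd := hval x e x e
  rw [h0] at hd
  have hd0 := (hasSum_zero_iff_of_nonneg fun n => mul_nonneg
    (by exact_mod_cast hp n) (mul_nonneg ((h1 n).2.1.inner_nonneg_right x)
      ((h2 n).2.1.inner_nonneg_right e))).1 hd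
  refine (hval x y x' e).unique (hasSum_of_eq hasSum_zero (fun n => ?_) rfl)
  have hn : (p n : ℂ) * (⟪x, ρ1 n x⟫ * ⟪e, ρ2 n e⟫) = 0 := congrFun hd0 n
  rcases mul_eq_zero.1 hn with h | h
  · rw [h, zero_mul]
  · rcases mul_eq_zero.1 h with h | h
    · rw [← (h1 n).2.1.inner_left_eq_inner_right, isPositive_apply_eq_zero (h1 n).2.1 h,
        inner_zero_left, zero_mul, mul_zero]
    · rw [isPositive_apply_eq_zero (h2 n).2.1 h, inner_zero_right, mul_zero, mul_zero]

lemma IsSEB.of_type {K W W' : Type} [NormedAddCommGroup K] [InnerProductSpace ℂ K]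
    [CompleteSpace K] [SeparableSpace K] [NormedAddCommGroup W] [InnerProductSpace ℂ W]
    [CompleteSpace W] [SeparableSpace W] [NormedAddCommGroup W'] [InnerProductSpace ℂ W']
    [CompleteSpace W'] [SeparableSpace W'] {Φ : (H1 →L[ℂ] H1) → (H2 →L[ℂ] H2)} (h : IsSEB Φ)
    (ts : TensorStruct K H1 W) (ts' : TensorStruct K H2 W') {ρ : W →L[ℂ] W} {σ : W' →L[ℂ] W'}
    (hρ : IsState ρ) (hσ : IsIdTensorApply ts ts' Φ ρ σ) : CDSeparable ts' σ :=
  h ⟨K⟩ ⟨W⟩ ⟨W'⟩ ts ts' ρ σ hρ hσ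

/-- A strongly entanglement breaking Schur map is diagonal: test on the pure state along
`c_0 ⊗ e_i + c_1 ⊗ e_k`. -/
lemma diagonal_of_seb [Countable ι] (b : HilbertBasis ι ℂ H)
    (A : H →L[ℂ] H) (SA : (H →L[ℂ] H) → (H →L[ℂ] H)) (hSAqo : IsQuantumOperation SA)
    (hSA : ∀ T, IsTraceClass T → ∀ i j,
      ⟪b i, SA T (b j)⟫ = ⟪b i, A (b j)⟫ * ⟪b i, T (b j)⟫)
    (hseb : IsSEB SA) : ∀ i j, i ≠ j → ⟪b i, A (b j)⟫ = 0 := by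
  intro i k hik
  obtain ⟨J, _, C, S, hS, hC⟩ := hSAqo
  have hCb := schur_kraus_apply b A SA hSA C hC
  obtain ⟨δ, -⟩ := exists_ell2_basis (Fin 2)
  have : SeparableSpace (lp (fun _ : Fin 2 => ℂ) 2) := separable_lp ℂ
  have : SeparableSpace (lp (fun _ : ι => lp (fun _ : Fin 2 => ℂ) 2) 2) := separable_lp _
  obtain ⟨ts, hts⟩ : ∃ ts : TensorStruct (lp (fun _ : Fin 2 => ℂ) 2) H
      (lp (fun _ : ι => lp (fun _ : Fin 2 => ℂ) 2) 2), ∀ x y l, ts.t x y l = ⟪b l, y⟫ • x :=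
    ⟨(modelTensor b _).swap, fun _ _ _ => rfl⟩
  have hbound : ∀ j l, ‖⟪b l, C j (b l)⟫ •
      ContinuousLinearMap.id ℂ (lp (fun _ : Fin 2 => ℂ) 2)‖ ≤ ‖C j‖ := fun j l => by
    calc _ ≤ ‖⟪b l, C j (b l)⟫‖ * 1 := by
          rw [norm_smul]
          gcongr
          exact ContinuousLinearMap.norm_id_le
      _ ≤ ‖b l‖ * ‖C j (b l)‖ := by rw [mul_one]; exact norm_inner_le_norm _ _
      _ ≤ ‖b l‖ * (‖C j‖ * ‖b l‖) := by gcongr; exact (C j).le_opNorm _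
      _ = ‖C j‖ := by rw [b.orthonormal.1 l]; ring
  obtain ⟨L, hL⟩ : ∃ L : J → lp (fun _ : ι => lp (fun _ : Fin 2 => ℂ) 2) 2 →L[ℂ]
      lp (fun _ : ι => lp (fun _ : Fin 2 => ℂ) 2) 2,
      ∀ j w l, L j w l = ⟪b l, C j (b l)⟫ • w l :=
    ⟨fun j => lpMap _ ‖C j‖ (norm_nonneg _) (hbound j), fun j w l => rfl⟩
  have hLt : ∀ j x y, L j (ts.t x y) = ts.t x (C j y) := fun j x y => by
    refine lp.ext (funext fun l => ?_)
    rw [hL, hts, hts, smul_smul, ← ContinuousLinearMap.adjoint_inner_left (C j) y,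
      schur_kraus_adjoint_apply b (C j) (hCb j), inner_smul_left, Complex.conj_conj]
  obtain ⟨ψ, hψ⟩ : ∃ ψ, ψ = ts.t (δ 0) (b i) + ts.t (δ 1) (b k) := ⟨_, rfl⟩
  have h01 : ⟪δ 0, δ 1⟫ = 0 := basis_inner_ne δ (by decide)
  have h10 : ⟪δ 1, δ 0⟫ = 0 := basis_inner_ne δ (by decide)
  have hψ1 : ⟪ts.t (δ 0) (b i), ψ⟫ = 1 := by
    rw [hψ, inner_add_right, ts.inner_t, ts.inner_t, basis_inner_self, basis_inner_self, h01]
    simp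
  have hψ2 : ⟪ts.t (δ 1) (b k), ψ⟫ = 1 := by
    rw [hψ, inner_add_right, ts.inner_t, ts.inner_t, basis_inner_self, basis_inner_self, h10]
    simp
  have hψ3 : ⟪ts.t (δ 0) (b k), ψ⟫ = 0 := by
    rw [hψ, inner_add_right, ts.inner_t, ts.inner_t, basis_inner_ne b hik.symm, h01]
    simp
  have hψ0 : ψ ≠ 0 := by
    rintro h
    rw [h, inner_zero_right] at hψ1
    exact zero_ne_one hψ1
  obtain ⟨c, hc, hφ⟩ : ∃ c : ℂ, c ≠ 0 ∧ ‖c • ψ‖ = 1 := by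
    refine ⟨(‖ψ‖ : ℂ)⁻¹, inv_ne_zero (by exact_mod_cast norm_ne_zero_iff.2 hψ0), ?_⟩
    rw [norm_smul, norm_inv, Complex.norm_real, norm_norm,
      inv_mul_cancel₀ (norm_ne_zero_iff.2 hψ0)]
  have hLψ : ∀ j, ‖L j ψ‖ ^ 2 ≤ 2 * (‖C j (b i)‖ ^ 2 + ‖C j (b k)‖ ^ 2) := fun j => by
    have h1 : ‖L j ψ‖ ≤ ‖C j (b i)‖ + ‖C j (b k)‖ := by
      rw [hψ, map_add, hLt, hLt]
      refine (norm_add_le _ _).trans_eq ?_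
      rw [ts.norm_t, ts.norm_t, δ.orthonormal.1, δ.orthonormal.1, one_mul, one_mul]
    calc ‖L j ψ‖ ^ 2 ≤ (‖C j (b i)‖ + ‖C j (b k)‖) ^ 2 := by gcongr
      _ ≤ _ := add_sq_le
  have hsum : Summable (fun j => L j ∘L ketbra (c • ψ) (c • ψ) ∘L adjoint (L j)) := by
    refine Summable.of_norm_bounded ((((kraus_summable_sq hS (b i)).add
      (kraus_summable_sq hS (b k))).mul_left 2).mul_left (‖c‖ ^ 2)) fun j => ?_
    rw [conj_ketbra, norm_ketbra, map_smul, norm_smul]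
    calc ‖c‖ * ‖L j ψ‖ * (‖c‖ * ‖L j ψ‖) = ‖c‖ ^ 2 * ‖L j ψ‖ ^ 2 := by ring
      _ ≤ _ := by gcongr; exact hLψ j
  have hσ : IsIdTensorApply ts ts SA (ketbra (c • ψ) (c • ψ))
      (∑' j, L j ∘L ketbra (c • ψ) (c • ψ) ∘L adjoint (L j)) :=
    ⟨J, inferInstance, C, S, hS, hC, L, hLt, hsum.hasSum⟩
  have hsep := hseb.of_type ts ts (isState_ketbra hφ) hσ
  have hblock := inner_idTensor_schur b A SA hSA ts ts hσ
  have h0 := hsep.inner_eq_zero (x := δ 0) (e := b k) (by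
    rw [hblock, ketbra_apply, inner_smul_right, inner_smul_right, hψ3, mul_zero, mul_zero,
      mul_zero]) (δ 1) (b i)
  rw [hblock, ketbra_apply, inner_smul_right, inner_smul_right, inner_smul_left, hψ1,
    ← inner_conj_symm ψ, hψ2] at h0
  simpa [hc] using h0

end EntanglementBreaking

/-- **Theorem 3.5.** Let `A ∈ B(H)` be positive and `S_A(T) = A ⊙ T` the Schur
map with respect to the orthonormal basis `{e_j}` of `H`.  The following are equivalent:
(i) some (equivalently, every) element of `CM(S_A)` is degradable;
(ii) `A` is diagonal with respect to `{e_j}`;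
(iii) `S_A` is strongly entanglement breaking. -/
theorem schur_map_complement_degradable_iff_diagonal
    {H : Type*}
    [NormedAddCommGroup H] [InnerProductSpace ℂ H] [CompleteSpace H] [SeparableSpace H]
    {ι : Type} [Countable ι] (b : HilbertBasis ι ℂ H)
    (A : H →L[ℂ] H) (hA : A.IsPositive)
    (SA : (H →L[ℂ] H) → (H →L[ℂ] H)) (hSAqo : IsQuantumOperation SA)
    (hSA : ∀ T, IsTraceClass T → ∀ i j,
      ⟪b i, SA T (b j)⟫ = ⟪b i, A (b j)⟫ * ⟪b i, T (b j)⟫) :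
    ((∀ (K : SepHilbert) (Ψ : (H →L[ℂ] H) → (K.carrier →L[ℂ] K.carrier)),
        IsQuantumOperation Ψ → IsComplementary Ψ SA → Degradable Ψ) ↔
      ∀ i j, i ≠ j → ⟪b i, A (b j)⟫ = 0) ∧
    ((∀ (K : SepHilbert) (Ψ : (H →L[ℂ] H) → (K.carrier →L[ℂ] K.carrier)),
        IsQuantumOperation Ψ → IsComplementary Ψ SA → Degradable Ψ) ↔
      IsSEB SA) := by
  have h12 : (∀ (K : SepHilbert) (Ψ : (H →L[ℂ] H) → (K.carrier →L[ℂ] K.carrier)),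
        IsQuantumOperation Ψ → IsComplementary Ψ SA → Degradable Ψ) ↔
      ∀ i j, i ≠ j → ⟪b i, A (b j)⟫ = 0 :=
    ⟨diagonal_of_degradable b A SA hSAqo hSA,
      fun hdiag K Ψ _ hΨ => degradable_of_diagonal b A SA hSA hdiag K Ψ hΨ⟩
  exact ⟨h12, h12.trans ⟨seb_of_diagonal b A hA SA hSA, diagonal_of_seb b A SA hSAqo hSA⟩⟩

end PaperInf
end
end
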